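/- Let y ∈ ℂ with Re(y) > 0. Then Σ_{n=1}^∞ log(n)/(e^{ny} − 1) = −(1/4)log(2π) + log²(y)/(2y) − γ²/(2y) + π²/(12y) − (2/y)(γ + log(y)) Σ_{n=1}^∞ { log(2πn/y) − (1/2)(ψ(2πin/y) + ψ(−2πin/y)) } + (1/y) Σ_{n=1}^∞ { ψ₁(2πin/y) + ψ₁(−2πin/y) − (1/2)(log²(2πin/y) + log²(−2πin/y)) + y/(4n) }, where both series on the right converge. -/

import Mathlib

open Filter Topology MeasureTheory

noncomputable def eulerGamma : ℝ := Real.eulerMascheroniConstant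

noncomputable def gamma1 : ℝ :=
  limUnder atTop (fun n : ℕ => ∑ j ∈ Finset.Icc 1 n, Real.log j / j - (Real.log n) ^ 2 / 2)

noncomputable def psi1 (z : ℂ) : ℂ :=
  -(gamma1 : ℂ) - Complex.log z / z -
    ∑' n : ℕ, (Complex.log (((n : ℂ) + 1) + z) / (((n : ℂ) + 1) + z)
      - Complex.log ((n : ℂ) + 1) / ((n : ℂ) + 1))

noncomputable def digamma (z : ℂ) : ℂ :=
  -(eulerGamma : ℂ) - 1 / z + ∑' n : ℕ, (1 / ((n : ℂ) + 1) - 1 / (((n : ℂ) + 1) + z))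

noncomputable def wigTerm (y : ℂ) (n : ℕ) : ℂ :=
  Complex.log (2 * (Real.pi : ℂ) * ((n : ℂ) + 1) / y)
    - (1/2) * (digamma (2 * (Real.pi : ℂ) * Complex.I * ((n : ℂ) + 1) / y)
      + digamma (-(2 * (Real.pi : ℂ) * Complex.I * ((n : ℂ) + 1) / y)))

noncomputable def psiTerm (y : ℂ) (n : ℕ) : ℂ :=
  psi1 (2 * (Real.pi : ℂ) * Complex.I * ((n : ℂ) + 1) / y)
    + psi1 (-(2 * (Real.pi : ℂ) * Complex.I * ((n : ℂ) + 1) / y))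
    - (1/2) * ((Complex.log (2 * (Real.pi : ℂ) * Complex.I * ((n : ℂ) + 1) / y)) ^ 2
      + (Complex.log (-(2 * (Real.pi : ℂ) * Complex.I * ((n : ℂ) + 1) / y))) ^ 2)
    + y / (4 * ((n : ℂ) + 1))

/-!
Write `Φ(w) = ∑ log j e^{-jw} + (γ + log w) / w` for `Re w > 0`. As `N → ∞`, the difference between
`∑_{k ≤ N} Φ(ky)` and the integral of `Φ(yv)` over `0 ≤ v ≤ N` tends to the Lambert series plus an
elementary multiple of `1 / y`; the Euler–Maclaurin formula evaluates this limit. The limits at `0`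
of `Φ` and of its antiderivative come from Stirling's formula and the definition of `γ₁`.

By Poisson summation, `Φ''` is a sum over `n ≠ 0` of second derivatives of functions
`(a + b log s) / s`, translated by `2πin`. So the Euler–Maclaurin remainder of `v ↦ Φ(yv)` is a sum
over `n`, whose `n`-th term is also the Euler–Maclaurin remainder of the series defining `ψ` and
`ψ₁` at `±2πin / y`: these are the terms of the two series on the right.
-/

/-- The periodic kernel `{u}(1 - {u})/2 = (1/6 - B₂({u}))/2`, which is the Peano kernel of the
trapezoidal rule, i.e. of the second-order Euler–Maclaurin formula. -/
noncomputable def trapezoidKernel (u : ℝ) : ℝ := Int.fract u * (1 - Int.fract u) / 2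

section EulerMaclaurin

lemma measurable_trapezoidKernel : Measurable trapezoidKernel :=
  (measurable_fract.mul (measurable_const.sub measurable_fract)).div_const _

lemma norm_trapezoidKernel_le_one (u : ℝ) : ‖trapezoidKernel u‖ ≤ 1 := by
  have h₀ := Int.fract_nonneg u
  have h₁ := (Int.fract_lt_one u).le
  rw [trapezoidKernel, Real.norm_of_nonneg (by nlinarith)]
  nlinarith

lemma trapezoidKernel_eq_of_mem_Ico {k : ℤ} {u : ℝ} (hu : u ∈ Set.Ico (k : ℝ) (k + 1)) :
    trapezoidKernel u = (u - k) * (1 - (u - k)) / 2 := by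
  rw [trapezoidKernel, Int.fract, Int.floor_eq_on_Ico k u hu]

variable {E : Type*} [NormedAddCommGroup E] [NormedSpace ℝ E]

lemma norm_trapezoidKernel_smul_le (u : ℝ) (x : E) : ‖trapezoidKernel u • x‖ ≤ ‖x‖ := by
  rw [norm_smul]
  exact mul_le_of_le_one_left (norm_nonneg x) (norm_trapezoidKernel_le_one u)

lemma integrable_trapezoidKernel_smul {f : ℝ → E} {μ : Measure ℝ} (hf : Integrable f μ) :
    Integrable (fun u => trapezoidKernel u • f u) μ :=
  hf.mono (measurable_trapezoidKernel.aestronglyMeasurable.smul hf.1)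
    (.of_forall fun u => norm_trapezoidKernel_smul_le u (f u))

lemma exists_norm_le_of_hasDerivAt_Ioo {f f' : ℝ → E} {a b : ℝ}
    (hf : ∀ u ∈ Set.Ioo a b, HasDerivAt f (f' u) u) (hcont : ContinuousOn f' (Set.Icc a b)) :
    ∃ C, ∀ u ∈ Set.Ioo a b, ‖f u‖ ≤ C := by
  obtain ⟨M, hM⟩ := isCompact_Icc.exists_bound_of_continuousOn hcont
  obtain hempty | ⟨m, hm⟩ := (Set.Ioo a b).eq_empty_or_nonempty
  · exact ⟨0, by simp [hempty]⟩
  refine ⟨‖f m‖ + M * (b - a), fun u hu => ?_⟩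
  have hM₀ : 0 ≤ M := (norm_nonneg _).trans (hM m (Set.Ioo_subset_Icc_self hm))
  have hdist : ‖u - m‖ ≤ b - a := by
    rw [Real.norm_eq_abs, abs_le]
    constructor <;> linarith [hu.1, hu.2, hm.1, hm.2]
  have hlip := (convex_Ioo a b).norm_image_sub_le_of_norm_hasDerivWithin_le
    (fun v hv => (hf v hv).hasDerivWithinAt) (fun v hv => hM v (Set.Ioo_subset_Icc_self hv)) hm hu
  calc ‖f u‖ ≤ ‖f m‖ + ‖f u - f m‖ := norm_le_norm_add_norm_sub' _ _
    _ ≤ ‖f m‖ + M * (b - a) := by gcongr; exact hlip.trans (by gcongr)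

variable [CompleteSpace E] {f f' f'' : ℝ → E}

/- With `b u = (u - c)(1 - (u - c))/2` one has `(b f' - b' f)' = b f'' + f`; as `b` vanishes at both
endpoints and `f'` is bounded, `f` need not be differentiable at the endpoints. -/
lemma integral_trapezoid_unit (c : ℝ) (hf : ContinuousOn f (Set.Icc c (c + 1)))
    (hf' : ∀ u ∈ Set.Ioo c (c + 1), HasDerivAt f (f' u) u)
    (hf'' : ∀ u ∈ Set.Ioo c (c + 1), HasDerivAt f' (f'' u) u)
    (hcont : ContinuousOn f'' (Set.Icc c (c + 1))) :
    ∫ u in c..c + 1, (f u + ((u - c) * (1 - (u - c)) / 2) • f'' u) =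
      (1 / 2 : ℝ) • (f c + f (c + 1)) := by
  have hc : c < c + 1 := by linarith
  set b : ℝ → ℝ := fun u => (u - c) * (1 - (u - c)) / 2
  set b' : ℝ → ℝ := fun u => 1 / 2 - (u - c)
  have hb (u : ℝ) : HasDerivAt b (b' u) u := by
    have h := (hasDerivAt_id u).sub_const c
    exact ((h.mul (h.const_sub 1)).div_const 2).congr_deriv (by simp only [b', id]; ring)
  have hb' (u : ℝ) : HasDerivAt b' (-1) u := ((hasDerivAt_id u).sub_const c).const_sub _
  have hderiv (u : ℝ) (hu : u ∈ Set.Ioo c (c + 1)) :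
      HasDerivAt (fun u => b u • f' u - b' u • f u) (f u + b u • f'' u) u :=
    (((hb u).smul (hf'' u hu)).sub ((hb' u).smul (hf' u hu))).congr_deriv (by module)
  have hint : IntervalIntegrable (fun u => f u + b u • f'' u) volume c (c + 1) := by
    refine ContinuousOn.intervalIntegrable ?_
    rw [Set.uIcc_of_le hc.le]
    exact hf.add ((by fun_prop : Continuous b).continuousOn.smul hcont)
  obtain ⟨C, hC⟩ := exists_norm_le_of_hasDerivAt_Ioo hf'' hcont
  have hlim {p : ℝ} (hp : b p = 0) (hmem : p ∈ Set.Icc c (c + 1)) :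
      Tendsto (fun u => b u • f' u - b' u • f u) (𝓝[Set.Ioo c (c + 1)] p) (𝓝 (0 - b' p • f p)) := by
    have hb₀ : Tendsto b (𝓝[Set.Ioo c (c + 1)] p) (𝓝 0) :=
      hp ▸ (hb p).continuousAt.tendsto.mono_left nhdsWithin_le_nhds
    have hbdd := isBoundedUnder_of_eventually_le (a := C)
      (eventually_nhdsWithin_of_forall hC : ∀ᶠ u in 𝓝[Set.Ioo c (c + 1)] p, ‖f' u‖ ≤ C)
    exact (hb₀.zero_smul_isBoundedUnder_le hbdd).sub
      (((hb' p).continuousAt.tendsto.mono_left nhdsWithin_le_nhds).smul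
        ((hf p hmem).mono Set.Ioo_subset_Icc_self))
  rw [intervalIntegral.integral_eq_sub_of_hasDerivAt_of_tendsto hc hderiv hint
    (nhdsWithin_Ioo_eq_nhdsGT hc ▸ hlim (by simp [b]) (Set.left_mem_Icc.2 hc.le))
    (nhdsWithin_Ioo_eq_nhdsLT hc ▸ hlim (by simp [b]) (Set.right_mem_Icc.2 hc.le))]
  simp only [b']
  module

lemma integral_trapezoidKernel_unit (k : ℤ) (hf : ContinuousOn f (Set.Icc (k : ℝ) (k + 1)))
    (hf' : ∀ u ∈ Set.Ioo (k : ℝ) (k + 1), HasDerivAt f (f' u) u)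
    (hf'' : ∀ u ∈ Set.Ioo (k : ℝ) (k + 1), HasDerivAt f' (f'' u) u)
    (hcont : ContinuousOn f'' (Set.Icc (k : ℝ) (k + 1))) :
    ∫ u in (k : ℝ)..k + 1, (f u + trapezoidKernel u • f'' u) =
      (1 / 2 : ℝ) • (f k + f (k + 1)) := by
  rw [← integral_trapezoid_unit k hf hf' hf'' hcont]
  refine intervalIntegral.integral_congr_Ioo_of_le (by linarith) fun u hu => ?_
  simp only [trapezoidKernel_eq_of_mem_Ico (Set.Ioo_subset_Ico_self hu)]

lemma sum_range_succ_eq_integral_add_trapezoidKernel (a n : ℕ)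
    (hf : ContinuousOn f (Set.Ici (a : ℝ)))
    (hf' : ∀ u ∈ Set.Ioi (a : ℝ), HasDerivAt f (f' u) u)
    (hf'' : ∀ u ∈ Set.Ioi (a : ℝ), HasDerivAt f' (f'' u) u)
    (hcont : ContinuousOn f'' (Set.Ici (a : ℝ))) :
    ∑ k ∈ Finset.range n, f (a + k + 1) = (∫ u in (a : ℝ)..a + n, f u) +
      (∫ u in (a : ℝ)..a + n, trapezoidKernel u • f'' u) + (1 / 2 : ℝ) • (f (a + n) - f a) := by
  have hint {g : ℝ → E} (hg : ContinuousOn g (Set.Ici (a : ℝ))) (x y : ℕ) :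
      IntervalIntegrable g volume (a + x) (a + y) :=
    (hg.mono fun t ht => (le_min (by simp) (by simp)).trans ht.1).intervalIntegrable
  have hsplit (k : ℕ) : ∫ u in (a + k : ℝ)..a + k + 1, (f u + trapezoidKernel u • f'' u) =
      (1 / 2 : ℝ) • (f (a + k) + f (a + k + 1)) := by
    have hIcc : Set.Icc (a + k : ℝ) (a + k + 1) ⊆ Set.Ici (a : ℝ) :=
      fun u hu => (le_add_of_nonneg_right k.cast_nonneg).trans hu.1
    have hIoo : Set.Ioo (a + k : ℝ) (a + k + 1) ⊆ Set.Ioi (a : ℝ) :=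
      fun u hu => (le_add_of_nonneg_right k.cast_nonneg).trans_lt hu.1
    simpa using integral_trapezoidKernel_unit (a + k : ℤ) (f := f) (f' := f') (f'' := f'')
      (by simpa using hf.mono hIcc) (by simpa using fun u h₁ h₂ => hf' u (hIoo ⟨h₁, h₂⟩))
      (by simpa using fun u h₁ h₂ => hf'' u (hIoo ⟨h₁, h₂⟩)) (by simpa using hcont.mono hIcc)
  have hkernel (x y : ℕ) :
      IntervalIntegrable (fun u => trapezoidKernel u • f'' u) volume (a + x) (a + y) :=
    intervalIntegrable_iff.2
      (integrable_trapezoidKernel_smul (intervalIntegrable_iff.1 (hint hcont x y)))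
  have hsum := intervalIntegral.sum_integral_adjacent_intervals (n := n)
    (a := fun k : ℕ => (a + k : ℝ)) fun k _ => (hint hf k (k + 1)).add (hkernel k (k + 1))
  simp only [Nat.cast_add, Nat.cast_one, Nat.cast_zero, add_zero, ← add_assoc, hsplit] at hsum
  have htelescope := Finset.sum_range_sub (fun k : ℕ => f (a + k)) n
  simp only [Nat.cast_add, Nat.cast_one, Nat.cast_zero, add_zero, ← add_assoc,
    Finset.sum_sub_distrib] at htelescope
  have h₀ := hint hf 0 n
  have h₁ := hkernel 0 n
  simp only [Nat.cast_zero, add_zero] at h₀ h₁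
  rw [← Finset.smul_sum, Finset.sum_add_distrib] at hsum
  rw [← intervalIntegral.integral_add h₀ h₁, ← hsum, ← htelescope]
  module

lemma tendsto_sum_range_succ_sub_integral (a : ℕ) (hf : ContinuousOn f (Set.Ici (a : ℝ)))
    (hf' : ∀ u ∈ Set.Ioi (a : ℝ), HasDerivAt f (f' u) u)
    (hf'' : ∀ u ∈ Set.Ioi (a : ℝ), HasDerivAt f' (f'' u) u)
    (hcont : ContinuousOn f'' (Set.Ici (a : ℝ))) (hint : IntegrableOn f'' (Set.Ioi (a : ℝ))) :
    Tendsto (fun n : ℕ => ∑ k ∈ Finset.range n, f (a + k + 1) - (∫ u in (a : ℝ)..a + n, f u) -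
        (1 / 2 : ℝ) • (f (a + n) - f a)) atTop
      (𝓝 (∫ u in Set.Ioi (a : ℝ), trapezoidKernel u • f'' u)) := by
  refine (intervalIntegral_tendsto_integral_Ioi (a : ℝ) (integrable_trapezoidKernel_smul hint)
    (tendsto_atTop_add_const_left _ (a : ℝ) tendsto_natCast_atTop_atTop)).congr fun n => ?_
  rw [sum_range_succ_eq_integral_add_trapezoidKernel a n hf hf' hf'' hcont]
  abel

end EulerMaclaurin

/-- The family `(a + b log s) / s`, which covers the summands `1 / s` of `digamma`, the summands
`log s / s` of `psi1`, and (for `a = γ`, `b = 1`) the Laplace transform of `-log`. -/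
noncomputable def logQuot (a b s : ℂ) : ℂ := (a + b * Complex.log s) / s

/-- The antiderivative of `logQuot a b` on the slit plane that vanishes at `1`. -/
noncomputable def logQuotPrimitive (a b s : ℂ) : ℂ := a * Complex.log s + b / 2 * Complex.log s ^ 2

/-- The derivative of `logQuot a b` on the slit plane. -/
noncomputable def logQuotDeriv (a b s : ℂ) : ℂ := (b - a + -b * Complex.log s) / s ^ 2

/-- The second derivative of `logQuot a b` on the slit plane. -/
noncomputable def logQuotDeriv₂ (a b s : ℂ) : ℂ := (2 * a - 3 * b + 2 * b * Complex.log s) / s ^ 3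

section LogQuot

variable (a b : ℂ) {s : ℂ}

lemma hasDerivAt_logQuotPrimitive (hs : s ∈ Complex.slitPlane) :
    HasDerivAt (logQuotPrimitive a b) (logQuot a b s) s := by
  have h := Complex.hasDerivAt_log hs
  refine ((h.const_mul a).add ((h.pow 2).const_mul (b / 2))).congr_deriv ?_
  simp only [logQuot, Nat.cast_ofNat, Nat.add_one_sub_one, pow_one]
  field_simp

lemma hasDerivAt_logQuot (hs : s ∈ Complex.slitPlane) :
    HasDerivAt (logQuot a b) (logQuotDeriv a b s) s := by
  have hs₀ := Complex.slitPlane_ne_zero hs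
  refine ((((Complex.hasDerivAt_log hs).const_mul b).const_add a).div (hasDerivAt_id s)
    hs₀).congr_deriv ?_
  simp only [logQuotDeriv, id]
  field_simp
  ring

lemma hasDerivAt_logQuotDeriv (hs : s ∈ Complex.slitPlane) :
    HasDerivAt (logQuotDeriv a b) (logQuotDeriv₂ a b s) s := by
  have hs₀ := Complex.slitPlane_ne_zero hs
  refine ((((Complex.hasDerivAt_log hs).const_mul (-b)).const_add (b - a)).div
    (hasDerivAt_pow 2 s) (pow_ne_zero 2 hs₀)).congr_deriv ?_
  simp only [logQuotDeriv₂, Nat.cast_ofNat, Nat.add_one_sub_one, pow_one]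
  field_simp
  ring

lemma continuousOn_logQuotDeriv₂ : ContinuousOn (logQuotDeriv₂ a b) Complex.slitPlane :=
  ContinuousOn.div
    (continuousOn_const.add
      (continuousOn_const.mul fun _ hs => (continuousAt_clog hs).continuousWithinAt))
    (by fun_prop) fun _ hs => pow_ne_zero 3 (Complex.slitPlane_ne_zero hs)

lemma exists_norm_add_mul_log_le {δ : ℝ} (hδ : 0 < δ) :
    ∃ C : ℝ, 0 ≤ C ∧ ∀ s : ℂ, δ ≤ ‖s‖ → ‖a + b * Complex.log s‖ ≤ C * ‖s‖ ^ (1 / 2 : ℝ) := by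
  refine ⟨(‖a‖ + ‖b‖ * (|Real.log δ| + 2 + Real.pi)) / δ ^ (1 / 2 : ℝ), by positivity,
    fun s hs => ?_⟩
  set q := (‖s‖ / δ) ^ (1 / 2 : ℝ)
  have hq : 1 ≤ ‖s‖ / δ := (one_le_div hδ).2 hs
  have hq₁ : 1 ≤ q := Real.one_le_rpow hq (by norm_num)
  have hlog_norm : |Real.log ‖s‖| ≤ |Real.log δ| + 2 * q := by
    have hsplit : Real.log ‖s‖ = Real.log δ + Real.log (‖s‖ / δ) := by
      rw [Real.log_div (hδ.trans_le hs).ne' hδ.ne']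
      ring
    have hlog := Real.log_le_rpow_div (zero_le_one.trans hq) (ε := 1 / 2) (by norm_num)
    rw [hsplit]
    refine (abs_add_le _ _).trans (add_le_add_right ?_ _)
    rw [abs_of_nonneg (Real.log_nonneg hq)]
    linarith
  have hlog : ‖Complex.log s‖ ≤ (|Real.log δ| + 2 + Real.pi) * q := by
    have h := Complex.norm_le_abs_re_add_abs_im (Complex.log s)
    rw [Complex.log_re, Complex.log_im] at h
    nlinarith [Complex.abs_arg_le_pi s, abs_nonneg (Real.log δ), Real.pi_pos]
  calc ‖a + b * Complex.log s‖ ≤ ‖a‖ * q + ‖b‖ * ((|Real.log δ| + 2 + Real.pi) * q) := by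
        refine (norm_add_le _ _).trans (add_le_add (le_mul_of_one_le_right (norm_nonneg a) hq₁) ?_)
        rw [norm_mul]
        gcongr
    _ = _ := by
        simp only [q, Real.div_rpow (norm_nonneg s) hδ.le]
        ring

lemma exists_norm_add_mul_log_div_pow_le (k : ℕ) {δ : ℝ} (hδ : 0 < δ) :
    ∃ C : ℝ, 0 ≤ C ∧ ∀ s : ℂ, δ ≤ ‖s‖ →
      ‖(a + b * Complex.log s) / s ^ k‖ ≤ C * ‖s‖ ^ (1 / 2 - k : ℝ) := by
  obtain ⟨C, hC₀, hC⟩ := exists_norm_add_mul_log_le a b hδ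
  refine ⟨C, hC₀, fun s hs => ?_⟩
  rw [norm_div, norm_pow, Real.rpow_sub (hδ.trans_le hs), Real.rpow_natCast, ← mul_div_assoc]
  gcongr
  exact hC s hs

variable {z : ℂ}

lemma ofReal_add_mem_slitPlane (hz : z ∈ Complex.slitPlane) {v : ℝ} (hv : 0 ≤ v) :
    (v : ℂ) + z ∈ Complex.slitPlane := by
  rcases hz with hre | him
  · exact .inl (by simpa using by linarith)
  · exact .inr (by simpa using him)

lemma ofReal_mul_mem_slitPlane (hz : z ∈ Complex.slitPlane) {t : ℝ} (ht : 0 < t) :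
    (t : ℂ) * z ∈ Complex.slitPlane := by
  rcases hz with hre | him
  · exact .inl (by simpa using mul_pos ht hre)
  · exact .inr (by simpa using ⟨ht.ne', him⟩)

/- The segment from `1` to `z` is compact and avoids `0`; then rescale. -/
lemma exists_pos_mul_add_le_norm (hz : z ∈ Complex.slitPlane) :
    ∃ κ : ℝ, 0 < κ ∧ ∀ v m : ℝ, 0 ≤ v → 0 ≤ m → κ * (v + m) ≤ ‖(v : ℂ) + m * z‖ := by
  have hcont : Continuous fun t : ℝ => ‖((1 - t : ℝ) : ℂ) + t * z‖ := by fun_prop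
  obtain ⟨t₀, ht₀, hmin⟩ := (isCompact_Icc (a := (0 : ℝ)) (b := 1)).exists_isMinOn
    (Set.nonempty_Icc.2 zero_le_one) hcont.continuousOn
  have hmem : ((1 - t₀ : ℝ) : ℂ) + t₀ * z ∈ Complex.slitPlane := by
    rcases ht₀.1.eq_or_lt with rfl | hpos
    · simp
    · exact ofReal_add_mem_slitPlane (ofReal_mul_mem_slitPlane hz hpos) (sub_nonneg.2 ht₀.2)
  refine ⟨_, norm_pos_iff.2 (Complex.slitPlane_ne_zero hmem), fun v m hv hm => ?_⟩
  rcases (add_nonneg hv hm).eq_or_lt with hzero | hpos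
  · simp [← hzero]
  have hle := hmin (a := m / (v + m)) ⟨by positivity, (div_le_one hpos).2 (by linarith)⟩
  have hscale : (v : ℂ) + m * z =
      ((v + m : ℝ) : ℂ) * (((1 - m / (v + m) : ℝ) : ℂ) + (m / (v + m) : ℝ) * z) := by
    have hne : (v : ℂ) + m ≠ 0 := by exact_mod_cast hpos.ne'
    push_cast
    field_simp
    ring
  rw [hscale, norm_mul, Complex.norm_real, Real.norm_of_nonneg hpos.le, mul_comm]
  exact mul_le_mul_of_nonneg_left hle hpos.le

lemma exists_norm_add_mul_log_div_pow_ray_le (k : ℕ) (hk : 1 ≤ k) (hz : z ∈ Complex.slitPlane) :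
    ∃ C : ℝ, 0 ≤ C ∧ ∀ v m : ℝ, 0 ≤ v → 1 ≤ m →
      ‖(a + b * Complex.log (v + m * z)) / (v + m * z) ^ k‖ ≤ C * (v + m) ^ (1 / 2 - k : ℝ) := by
  obtain ⟨κ, hκ, hlower⟩ := exists_pos_mul_add_le_norm hz
  obtain ⟨C, hC₀, hC⟩ := exists_norm_add_mul_log_div_pow_le a b k hκ
  refine ⟨C * κ ^ (1 / 2 - k : ℝ), by positivity, fun v m hv hm => ?_⟩
  have hle := hlower v m hv (by linarith)
  have hk' : (1 : ℝ) ≤ k := by exact_mod_cast hk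
  calc _ ≤ C * ‖(v : ℂ) + m * z‖ ^ (1 / 2 - k : ℝ) := hC _ (by nlinarith)
    _ ≤ C * (κ * (v + m)) ^ (1 / 2 - k : ℝ) :=
        mul_le_mul_of_nonneg_left
          (Real.rpow_le_rpow_of_nonpos (by nlinarith) hle (by linarith)) hC₀
    _ = _ := by rw [Real.mul_rpow hκ.le (by linarith), mul_assoc]

end LogQuot

section EulerMaclaurinLogQuot

variable (a b : ℂ) {z : ℂ}

lemma isBigO_sub_natCast_of_hasDerivAt {f f' : ℂ → ℂ} {C α : ℝ} (hα : 0 ≤ α)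
    (hf : ∀ s ∈ Complex.slitPlane, HasDerivAt f (f' s) s)
    (hbound : ∀ s : ℂ, 1 ≤ ‖s‖ → ‖f' s‖ ≤ C * ‖s‖ ^ (-α)) (z : ℂ) :
    (fun n : ℕ => f (n + z) - f n) =O[atTop] fun n : ℕ => (n : ℝ) ^ (-α) := by
  refine Asymptotics.IsBigO.of_bound (|C| * (1 / 2 : ℝ) ^ (-α) * ‖z‖) ?_
  filter_upwards [eventually_ge_atTop ⌈2 * (‖z‖ + 1)⌉₊] with n hn
  have hn' : 2 * (‖z‖ + 1) ≤ n := Nat.ceil_le.1 hn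
  have hball {s : ℂ} (hs : s ∈ Metric.closedBall (n : ℂ) ‖z‖) : (n : ℝ) / 2 ≤ s.re := by
    have h := (Complex.abs_re_le_norm (s - n)).trans (mem_closedBall_iff_norm.1 hs)
    rw [Complex.sub_re, Complex.natCast_re, abs_le] at h
    linarith [h.1, norm_nonneg z]
  have hn₀ : (0 : ℝ) < n := by linarith [norm_nonneg z]
  have hderiv {s : ℂ} (hs : s ∈ Metric.closedBall (n : ℂ) ‖z‖) :
      ‖f' s‖ ≤ |C| * (1 / 2 : ℝ) ^ (-α) * (n : ℝ) ^ (-α) := by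
    have hnorm : (1 / 2 : ℝ) * n ≤ ‖s‖ := by linarith [hball hs, Complex.re_le_norm s]
    rw [mul_assoc, ← Real.mul_rpow (by norm_num) hn₀.le]
    refine (hbound s (by linarith [norm_nonneg z])).trans
      (mul_le_mul (le_abs_self C) ?_ (by positivity) (abs_nonneg C))
    exact Real.rpow_le_rpow_of_nonpos (by positivity) hnorm (neg_nonpos.2 hα)
  have hmvt := (convex_closedBall (n : ℂ) ‖z‖).norm_image_sub_le_of_norm_hasDerivWithin_le
    (fun s hs => (hf s (.inl (by linarith [hball hs]))).hasDerivWithinAt) (fun s hs => hderiv hs)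
    (Metric.mem_closedBall_self (norm_nonneg z)) (show (n : ℂ) + z ∈ _ by simp)
  rw [Real.norm_of_nonneg (by positivity)]
  exact hmvt.trans_eq (by rw [add_sub_cancel_left]; ring)

lemma tendsto_logQuotPrimitive_add_sub (z : ℂ) :
    Tendsto (fun n : ℕ => logQuotPrimitive a b (n + z) - logQuotPrimitive a b n) atTop (𝓝 0) := by
  obtain ⟨C, -, hC⟩ := exists_norm_add_mul_log_div_pow_le a b 1 one_pos
  refine (isBigO_sub_natCast_of_hasDerivAt (C := C) (α := 1 / 2) (by norm_num)
    (fun s hs => hasDerivAt_logQuotPrimitive a b hs) (fun s hs => ?_) z).trans_tendsto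
    ((tendsto_rpow_neg_atTop (by norm_num)).comp tendsto_natCast_atTop_atTop)
  have hexp : (1 / 2 - (1 : ℕ) : ℝ) = -(1 / 2) := by norm_num
  simpa only [logQuot, pow_one, hexp] using hC s hs

lemma summable_logQuot_add_sub (z : ℂ) :
    Summable fun n : ℕ => logQuot a b (n + 1 + z) - logQuot a b (n + 1) := by
  obtain ⟨C, -, hC⟩ := exists_norm_add_mul_log_div_pow_le (b - a) (-b) 2 one_pos
  have hexp : (1 / 2 - (2 : ℕ) : ℝ) = -(3 / 2) := by norm_num
  rw [hexp] at hC
  have hO := isBigO_sub_natCast_of_hasDerivAt (α := 3 / 2) (by norm_num)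
    (fun s hs => hasDerivAt_logQuot a b hs) hC z
  have hsum := summable_of_isBigO_nat (Real.summable_nat_rpow.2 (by norm_num)) hO
  simpa using (summable_nat_add_iff 1).2 hsum

lemma tendsto_logQuot_natCast_add (hz : z ∈ Complex.slitPlane) :
    Tendsto (fun n : ℕ => logQuot a b (n + z)) atTop (𝓝 0) := by
  obtain ⟨C, -, hC⟩ := exists_norm_add_mul_log_div_pow_ray_le a b 1 le_rfl hz
  have hlim : Tendsto (fun n : ℕ => C * ((n : ℝ) + 1) ^ (-(1 / 2) : ℝ)) atTop (𝓝 (C * 0)) :=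
    ((tendsto_rpow_neg_atTop (by norm_num)).comp
      (tendsto_atTop_add_const_right _ 1 tendsto_natCast_atTop_atTop)).const_mul C
  rw [mul_zero] at hlim
  refine squeeze_zero_norm (fun n => ?_) hlim
  have hexp : (1 / 2 - (1 : ℕ) : ℝ) = -(1 / 2) := by norm_num
  simpa only [logQuot, pow_one, hexp, Complex.ofReal_natCast, Complex.ofReal_one, one_mul] using
    hC n 1 n.cast_nonneg le_rfl

lemma continuousOn_logQuotDeriv₂_ray (hz : z ∈ Complex.slitPlane) :
    ContinuousOn (fun v : ℝ => logQuotDeriv₂ a b (v + z)) (Set.Ici 0) :=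
  (continuousOn_logQuotDeriv₂ a b).comp (by fun_prop)
    fun _ hv => ofReal_add_mem_slitPlane hz hv

lemma integrableOn_logQuotDeriv₂_ray (hz : z ∈ Complex.slitPlane) :
    IntegrableOn (fun v : ℝ => logQuotDeriv₂ a b (v + z)) (Set.Ioi 0) := by
  obtain ⟨C, -, hC⟩ :=
    exists_norm_add_mul_log_div_pow_ray_le (2 * a - 3 * b) (2 * b) 3 (by norm_num) hz
  have hpow : IntegrableOn (fun v : ℝ => C * (v + 1) ^ (-(5 / 2) : ℝ)) (Set.Ioi 0) :=
    (integrableOn_add_rpow_Ioi_of_lt (by norm_num) (by norm_num)).const_mul C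
  refine hpow.mono' (((continuousOn_logQuotDeriv₂_ray a b hz).mono
    Set.Ioi_subset_Ici_self).aestronglyMeasurable measurableSet_Ioi)
    ((ae_restrict_iff' measurableSet_Ioi).2 (.of_forall fun v hv => ?_))
  have hexp : (1 / 2 - (3 : ℕ) : ℝ) = -(5 / 2) := by norm_num
  simpa only [logQuotDeriv₂, hexp, Complex.ofReal_one, one_mul] using
    hC v 1 (le_of_lt hv) le_rfl

lemma hasDerivAt_comp_ofReal_add {f f' : ℂ → ℂ}
    (hf : ∀ s ∈ Complex.slitPlane, HasDerivAt f (f' s) s) (hz : z ∈ Complex.slitPlane) {v : ℝ}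
    (hv : 0 ≤ v) : HasDerivAt (fun v : ℝ => f (v + z)) (f' (v + z)) v :=
  ((hf _ (ofReal_add_mem_slitPlane hz hv)).comp_add_const (v : ℂ) z).comp_ofReal

lemma tendsto_sum_logQuot_sub_primitive (hz : z ∈ Complex.slitPlane) :
    Tendsto (fun n : ℕ => ∑ k ∈ Finset.range n, logQuot a b (k + 1 + z) - logQuotPrimitive a b n)
      atTop (𝓝 ((∫ v in Set.Ioi (0 : ℝ), trapezoidKernel v • logQuotDeriv₂ a b (v + z)) -
        logQuotPrimitive a b z - logQuot a b z / 2)) := by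
  have hderiv {v : ℝ} (hv : 0 ≤ v) :=
    hasDerivAt_comp_ofReal_add (fun s hs => hasDerivAt_logQuot a b hs) hz hv
  have hcont : ContinuousOn (fun v : ℝ => logQuot a b (v + z)) (Set.Ici 0) :=
    fun v hv => (hderiv hv).continuousAt.continuousWithinAt
  have hEM := tendsto_sum_range_succ_sub_integral (f := fun v : ℝ => logQuot a b (v + z)) 0
    (by simpa using hcont) (fun v hv => hderiv (le_of_lt (by simpa using hv)))
    (fun v hv => hasDerivAt_comp_ofReal_add (fun s hs => hasDerivAt_logQuotDeriv a b hs) hz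
      (le_of_lt (by simpa using hv)))
    (by simpa using continuousOn_logQuotDeriv₂_ray a b hz)
    (by simpa using integrableOn_logQuotDeriv₂_ray a b hz)
  have hFTC (n : ℕ) : ∫ v in (0 : ℝ)..n, logQuot a b (v + z) =
      logQuotPrimitive a b (n + z) - logQuotPrimitive a b z := by
    have hmem : Set.uIcc (0 : ℝ) n ⊆ Set.Ici 0 := by
      rw [Set.uIcc_of_le n.cast_nonneg]
      exact Set.Icc_subset_Ici_self
    have h := intervalIntegral.integral_eq_sub_of_hasDerivAt
      (fun v hv => hasDerivAt_comp_ofReal_add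
        (fun s hs => hasDerivAt_logQuotPrimitive a b hs) hz (hmem hv))
      (hcont.mono hmem).intervalIntegrable
    simpa using h
  have hlim := ((hEM.add (tendsto_logQuotPrimitive_add_sub a b z)).add
    ((tendsto_logQuot_natCast_add a b hz).div_const 2)).sub_const
      (logQuotPrimitive a b z + logQuot a b z / 2)
  simp only [Nat.cast_zero, zero_add, hFTC] at hlim
  refine (hlim.congr fun n => ?_).trans (by simp [sub_sub])
  have hcast (k : ℕ) : ((k + 1 : ℝ) : ℂ) = k + 1 := by push_cast; rfl
  simp only [Complex.real_smul, Complex.ofReal_natCast, Complex.ofReal_zero, hcast]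
  generalize ∑ k ∈ Finset.range n, logQuot a b (k + 1 + z) = S
  push_cast
  ring_nf

lemma sum_logQuot_zero_one_sub_primitive (n : ℕ) :
    ∑ k ∈ Finset.range n, logQuot 0 1 (k + 1) - logQuotPrimitive 0 1 n =
      ((∑ j ∈ Finset.Icc 1 n, Real.log j / j - Real.log n ^ 2 / 2 : ℝ) : ℂ) := by
  have hsum : ∑ j ∈ Finset.Icc 1 n, Real.log j / j =
      ∑ k ∈ Finset.range n, Real.log (k + 1 : ℕ) / (k + 1 : ℕ) := by
    rw [Finset.range_eq_Ico, Finset.sum_Ico_add' (fun j : ℕ => Real.log j / j) 0 n 1]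
    rfl
  rw [hsum]
  simp only [logQuot, logQuotPrimitive, Complex.ofReal_sub, Complex.ofReal_sum, Complex.ofReal_div,
    Complex.ofReal_pow, Complex.natCast_log, Complex.ofReal_natCast]
  push_cast
  simp only [zero_add, zero_mul, one_mul]
  ring

lemma tendsto_sum_log_div_sub_gamma1 :
    Tendsto (fun n : ℕ => ∑ j ∈ Finset.Icc 1 n, Real.log j / j - Real.log n ^ 2 / 2) atTop
      (𝓝 gamma1) := by
  have hlim := (tendsto_sum_logQuot_sub_primitive 0 1 Complex.one_mem_slitPlane).sub
    (summable_logQuot_add_sub 0 1 1).hasSum.tendsto_sum_nat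
  refine tendsto_nhds_limUnder ⟨_, ((Complex.continuous_re.tendsto _).comp hlim).congr fun n => ?_⟩
  rw [← Complex.ofReal_re (_ - _), ← sum_logQuot_zero_one_sub_primitive, Function.comp_apply,
    Finset.sum_sub_distrib]
  congr 1
  ring

lemma tendsto_sum_logQuot_natCast_sub_primitive :
    Tendsto (fun n : ℕ => ∑ k ∈ Finset.range n, logQuot a b (k + 1) - logQuotPrimitive a b n)
      atTop (𝓝 (a * eulerGamma + b * gamma1)) := by
  have hγ := (Complex.continuous_ofReal.tendsto _).comp Real.tendsto_harmonic_sub_log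
  have hγ₁ := ((Complex.continuous_ofReal.tendsto _).comp tendsto_sum_log_div_sub_gamma1).congr
    fun n => (sum_logQuot_zero_one_sub_primitive n).symm
  refine ((hγ.const_mul a).add (hγ₁.const_mul b)).congr fun n => ?_
  have hlinear : ∑ k ∈ Finset.range n, logQuot a b (k + 1) =
      a * ∑ k ∈ Finset.range n, ((k : ℂ) + 1)⁻¹ +
        b * ∑ k ∈ Finset.range n, logQuot 0 1 (k + 1) := by
    rw [Finset.mul_sum, Finset.mul_sum, ← Finset.sum_add_distrib]
    refine Finset.sum_congr rfl fun k _ => ?_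
    simp only [logQuot]
    ring
  rw [hlinear]
  simp only [Function.comp_apply, harmonic, logQuotPrimitive, Complex.ofReal_sub,
    Complex.natCast_log]
  push_cast
  ring

end EulerMaclaurinLogQuot

section Psi

/-- The common form of `digamma` (`a = 1`, `b = 0`) and `psi1` (`a = 0`, `b = 1`). -/
noncomputable def logQuotPsi (a b z : ℂ) : ℂ :=
  -(a * eulerGamma + b * gamma1) - logQuot a b z -
    ∑' n : ℕ, (logQuot a b (n + 1 + z) - logQuot a b (n + 1))

lemma logQuotPsi_one_zero (z : ℂ) : logQuotPsi 1 0 z = digamma z := by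
  have hneg (n : ℕ) : logQuot 1 0 (n + 1 + z) - logQuot 1 0 (n + 1) =
      -(1 / ((n : ℂ) + 1) - 1 / ((n : ℂ) + 1 + z)) := by
    simp [logQuot]
  simp only [logQuotPsi, hneg, tsum_neg, digamma]
  simp [logQuot]

lemma logQuotPsi_zero_one (z : ℂ) : logQuotPsi 0 1 z = psi1 z := by
  simp [logQuotPsi, logQuot, psi1]

lemma logQuotPsi_eq_sub_integral (a b : ℂ) {z : ℂ} (hz : z ∈ Complex.slitPlane) :
    logQuotPsi a b z = logQuotPrimitive a b z - logQuot a b z / 2 -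
      ∫ v in Set.Ioi (0 : ℝ), trapezoidKernel v • logQuotDeriv₂ a b (v + z) := by
  have htsum : ∑' n : ℕ, (logQuot a b (n + 1 + z) - logQuot a b (n + 1)) =
      (∫ v in Set.Ioi (0 : ℝ), trapezoidKernel v • logQuotDeriv₂ a b (v + z)) -
        logQuotPrimitive a b z - logQuot a b z / 2 - (a * eulerGamma + b * gamma1) := by
    refine tendsto_nhds_unique (summable_logQuot_add_sub a b z).hasSum.tendsto_sum_nat
      (((tendsto_sum_logQuot_sub_primitive a b hz).sub
        (tendsto_sum_logQuot_natCast_sub_primitive a b)).congr fun n => ?_)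
    rw [Finset.sum_sub_distrib]
    ring
  rw [logQuotPsi, htsum]
  ring

end Psi

section DualSeries

lemma hasSum_integral_of_norm_le_mul {α E : Type*} [MeasurableSpace α] {μ : Measure α}
    [NormedAddCommGroup E] [NormedSpace ℝ E] {f : ℕ → α → E} {u : ℕ → ℝ} {g : α → ℝ}
    (hf : ∀ n, AEStronglyMeasurable (f n) μ) (hu : Summable u) (hg : Integrable g μ)
    (hbound : ∀ n, ∀ᵐ v ∂μ, ‖f n v‖ ≤ u n * g v) :
    HasSum (fun n => ∫ v, f n v ∂μ) (∫ v, ∑' n, f n v ∂μ) := by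
  have hint (n : ℕ) : Integrable (f n) μ := (hg.const_mul (u n)).mono' (hf n) (hbound n)
  refine hasSum_integral_of_summable_integral_norm hint
    ((hu.mul_right (∫ v, g v ∂μ)).of_nonneg_of_le
      (fun n => integral_nonneg fun v => norm_nonneg _) fun n => ?_)
  rw [← integral_const_mul]
  exact integral_mono_ae (hint n).norm (hg.const_mul (u n)) (hbound n)

/-- The `n`-th pair of terms of the sum of `logQuotDeriv₂ a b` over the points `v + kζ`, `k ≠ 0`. -/
noncomputable def logQuotDeriv₂Pair (a b ζ : ℂ) (n : ℕ) (v : ℝ) : ℂ :=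
  logQuotDeriv₂ a b (v + (n + 1) * ζ) + logQuotDeriv₂ a b (v + (n + 1) * -ζ)

lemma mem_slitPlane_natCast_add_one_mul {ζ : ℂ} (hζ : ζ.im ≠ 0) (n : ℕ) :
    ((n : ℂ) + 1) * ζ ∈ Complex.slitPlane := by
  exact_mod_cast ofReal_mul_mem_slitPlane (.inr hζ) (n.cast_add_one_pos (α := ℝ))

/- By the inequality of arithmetic and geometric means, `(v + m) ^ 2 ≥ (v + 1) m`. -/
lemma rpow_add_le_rpow_mul_rpow {v m : ℝ} (hv : 0 ≤ v) (hm : 1 ≤ m) :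
    (v + m) ^ (-(5 / 2) : ℝ) ≤ m ^ (-(5 / 4) : ℝ) * (v + 1) ^ (-(5 / 4) : ℝ) := by
  rw [← Real.mul_rpow (by linarith) (by linarith),
    show (-(5 / 2) : ℝ) = (2 : ℕ) * -(5 / 4) by norm_num, Real.rpow_mul (by linarith),
    Real.rpow_natCast]
  exact Real.rpow_le_rpow_of_nonpos (by nlinarith) (by nlinarith) (by norm_num)

lemma summable_natCast_add_one_rpow : Summable fun n : ℕ => ((n : ℝ) + 1) ^ (-(5 / 4) : ℝ) := by
  have h : Summable fun n : ℕ => (n : ℝ) ^ (-(5 / 4) : ℝ) := Real.summable_nat_rpow.2 (by norm_num)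
  simpa using (summable_nat_add_iff 1).2 h

lemma integrableOn_add_one_rpow :
    IntegrableOn (fun v : ℝ => (v + 1) ^ (-(5 / 4) : ℝ)) (Set.Ioi 0) :=
  integrableOn_add_rpow_Ioi_of_lt (by norm_num) (by norm_num)

variable (a b : ℂ) {ζ : ℂ}

lemma continuousOn_logQuotDeriv₂Pair (hζ : ζ.im ≠ 0) (n : ℕ) :
    ContinuousOn (logQuotDeriv₂Pair a b ζ n) (Set.Ici 0) :=
  (continuousOn_logQuotDeriv₂_ray a b (mem_slitPlane_natCast_add_one_mul hζ n)).add
    (continuousOn_logQuotDeriv₂_ray a b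
      (mem_slitPlane_natCast_add_one_mul (by simpa using hζ) n))

lemma exists_norm_logQuotDeriv₂Pair_le (hζ : ζ.im ≠ 0) :
    ∃ C : ℝ, 0 ≤ C ∧ ∀ (n : ℕ) (v : ℝ), 0 ≤ v → ‖logQuotDeriv₂Pair a b ζ n v‖ ≤
      C * ((n : ℝ) + 1) ^ (-(5 / 4) : ℝ) * (v + 1) ^ (-(5 / 4) : ℝ) := by
  have hray {ξ : ℂ} (hξ : ξ.im ≠ 0) :=
    exists_norm_add_mul_log_div_pow_ray_le (2 * a - 3 * b) (2 * b) 3 (by norm_num) (.inr hξ)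
  obtain ⟨C₁, hC₁, h₁⟩ := hray hζ
  obtain ⟨C₂, hC₂, h₂⟩ := hray (ξ := -ζ) (by simpa using hζ)
  refine ⟨C₁ + C₂, add_nonneg hC₁ hC₂, fun n v hv => ?_⟩
  have hn : (1 : ℝ) ≤ n + 1 := by linarith [n.cast_nonneg (α := ℝ)]
  have hexp : (1 / 2 - (3 : ℕ) : ℝ) = -(5 / 2) := by norm_num
  have hcast : (((n : ℝ) + 1 : ℝ) : ℂ) = n + 1 := by push_cast; rfl
  have h := (norm_add_le _ _).trans (add_le_add (h₁ v _ hv hn) (h₂ v _ hv hn))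
  rw [hexp, ← add_mul, hcast] at h
  exact h.trans (by
    rw [mul_assoc]
    exact mul_le_mul_of_nonneg_left (rpow_add_le_rpow_mul_rpow hv hn) (add_nonneg hC₁ hC₂))

lemma hasSum_integral_logQuotDeriv₂Pair (hζ : ζ.im ≠ 0) :
    HasSum (fun n => ∫ v in Set.Ioi (0 : ℝ), trapezoidKernel v • logQuotDeriv₂Pair a b ζ n v)
      (∫ v in Set.Ioi (0 : ℝ), trapezoidKernel v • ∑' n, logQuotDeriv₂Pair a b ζ n v) := by
  obtain ⟨C, -, hC⟩ := exists_norm_logQuotDeriv₂Pair_le a b hζ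
  simp only [← tsum_const_smul'']
  refine hasSum_integral_of_norm_le_mul (fun n => ?_) (summable_natCast_add_one_rpow.mul_left C)
    integrableOn_add_one_rpow fun n => ?_
  · exact measurable_trapezoidKernel.aestronglyMeasurable.smul
      (((continuousOn_logQuotDeriv₂Pair a b hζ n).mono
        Set.Ioi_subset_Ici_self).aestronglyMeasurable measurableSet_Ioi)
  · exact (ae_restrict_iff' measurableSet_Ioi).2 (.of_forall fun v hv =>
      (norm_trapezoidKernel_smul_le v _).trans (hC n v (le_of_lt hv)))

lemma summable_logQuotDeriv₂Pair (hζ : ζ.im ≠ 0) {v : ℝ} (hv : 0 ≤ v) :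
    Summable fun n => logQuotDeriv₂Pair a b ζ n v := by
  obtain ⟨C, -, hC⟩ := exists_norm_logQuotDeriv₂Pair_le a b hζ
  exact .of_norm_bounded ((summable_natCast_add_one_rpow.mul_left C).mul_right _)
    fun n => hC n v hv

lemma continuousOn_tsum_logQuotDeriv₂Pair (hζ : ζ.im ≠ 0) :
    ContinuousOn (fun v => ∑' n, logQuotDeriv₂Pair a b ζ n v) (Set.Ici 0) := by
  obtain ⟨C, hC₀, hC⟩ := exists_norm_logQuotDeriv₂Pair_le a b hζ
  refine continuousOn_tsum (fun n => continuousOn_logQuotDeriv₂Pair a b hζ n)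
    (summable_natCast_add_one_rpow.mul_left C) fun n v hv => (hC n v hv).trans ?_
  exact mul_le_of_le_one_right (by positivity)
    (Real.rpow_le_one_of_one_le_of_nonpos (by linarith [Set.mem_Ici.1 hv]) (by norm_num))

lemma integrableOn_tsum_logQuotDeriv₂Pair (hζ : ζ.im ≠ 0) :
    IntegrableOn (fun v => ∑' n, logQuotDeriv₂Pair a b ζ n v) (Set.Ioi 0) := by
  obtain ⟨C, -, hC⟩ := exists_norm_logQuotDeriv₂Pair_le a b hζ
  refine (integrableOn_add_one_rpow.const_mul
    (∑' n : ℕ, C * ((n : ℝ) + 1) ^ (-(5 / 4) : ℝ))).mono'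
    (((continuousOn_tsum_logQuotDeriv₂Pair a b hζ).mono
      Set.Ioi_subset_Ici_self).aestronglyMeasurable measurableSet_Ioi)
    ((ae_restrict_iff' measurableSet_Ioi).2 (.of_forall fun v hv => ?_))
  exact tsum_of_norm_bounded ((summable_natCast_add_one_rpow.mul_left C).hasSum.mul_right _)
    fun n => hC n v (le_of_lt hv)

end DualSeries

section PsiSeries

lemma log_I_mul {x : ℂ} (hx : 0 < x.re) :
    Complex.log (Complex.I * x) = Complex.log x + Real.pi / 2 * Complex.I := by
  have harg := abs_lt.1 (Complex.abs_arg_lt_pi_div_two_iff.2 (.inl hx))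
  rw [Complex.log_mul Complex.I_ne_zero (by rintro rfl; simp at hx), Complex.log_I, add_comm]
  rw [Complex.arg_I]
  constructor <;> linarith [harg.1, harg.2, Real.pi_pos]

lemma log_neg_I_mul {x : ℂ} (hx : 0 < x.re) :
    Complex.log (-(Complex.I * x)) = Complex.log x - Real.pi / 2 * Complex.I := by
  have harg := abs_lt.1 (Complex.abs_arg_lt_pi_div_two_iff.2 (.inl hx))
  rw [← neg_mul, Complex.log_mul (neg_ne_zero.2 Complex.I_ne_zero) (by rintro rfl; simp at hx),
    Complex.log_neg_I]
  · ring
  rw [Complex.arg_neg_I]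
  constructor <;> linarith [harg.1, harg.2, Real.pi_pos]

lemma logQuotPsi_add_logQuotPsi_neg (a b : ℂ) {ζ : ℂ} (hζ : ζ.im ≠ 0) (n : ℕ) :
    logQuotPsi a b ((n + 1) * ζ) + logQuotPsi a b (-((n + 1) * ζ)) =
      logQuotPrimitive a b ((n + 1) * ζ) + logQuotPrimitive a b (-((n + 1) * ζ)) -
        (logQuot a b ((n + 1) * ζ) + logQuot a b (-((n + 1) * ζ))) / 2 -
        ∫ v in Set.Ioi (0 : ℝ), trapezoidKernel v • logQuotDeriv₂Pair a b ζ n v := by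
  have hz := mem_slitPlane_natCast_add_one_mul hζ n
  have hz' := mem_slitPlane_natCast_add_one_mul (ζ := -ζ) (by simpa using hζ) n
  have hint {z : ℂ} (hz : z ∈ Complex.slitPlane) :=
    integrable_trapezoidKernel_smul (integrableOn_logQuotDeriv₂_ray a b hz)
  have hadd := integral_add (hint hz) (hint hz')
  simp only [← smul_add] at hadd
  rw [← mul_neg, logQuotPsi_eq_sub_integral a b hz, logQuotPsi_eq_sub_integral a b hz']
  simp only [logQuotDeriv₂Pair, hadd]
  ring

variable {y : ℂ}

lemma inv_re_pos (hy : 0 < y.re) : 0 < (y⁻¹).re := by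
  rw [Complex.inv_re]
  exact div_pos hy (Complex.normSq_pos.2 (by rintro rfl; simp at hy))

lemma im_two_pi_I_div_ne_zero (hy : 0 < y.re) : (2 * Real.pi * Complex.I / y).im ≠ 0 := by
  have him : (2 * Real.pi * Complex.I / y).im = 2 * Real.pi * (y⁻¹).re := by
    simp [div_eq_mul_inv]
  rw [him]
  exact (mul_pos Real.two_pi_pos (inv_re_pos hy)).ne'

lemma re_two_pi_mul_div_pos (hy : 0 < y.re) (n : ℕ) :
    0 < (2 * (Real.pi : ℂ) * ((n : ℂ) + 1) / y).re := by
  have hre : (2 * (Real.pi : ℂ) * ((n : ℂ) + 1) / y).re = 2 * Real.pi * (n + 1) * (y⁻¹).re := by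
    rw [div_eq_mul_inv, ← Complex.re_ofReal_mul]
    push_cast
    rfl
  rw [hre]
  exact mul_pos (mul_pos Real.two_pi_pos n.cast_add_one_pos) (inv_re_pos hy)

lemma wigTerm_eq_integral (hy : 0 < y.re) (n : ℕ) :
    wigTerm y n = 1 / 2 * ∫ v in Set.Ioi (0 : ℝ),
      trapezoidKernel v • logQuotDeriv₂Pair 1 0 (2 * Real.pi * Complex.I / y) n v := by
  have h := logQuotPsi_add_logQuotPsi_neg 1 0 (im_two_pi_I_div_ne_zero hy) n
  have hx := re_two_pi_mul_div_pos hy n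
  have harg : ((n : ℂ) + 1) * (2 * Real.pi * Complex.I / y) =
      Complex.I * (2 * Real.pi * (n + 1) / y) := by ring
  have hargy : 2 * Real.pi * Complex.I * ((n : ℂ) + 1) / y =
      Complex.I * (2 * Real.pi * (n + 1) / y) := by ring
  rw [harg] at h
  simp only [logQuotPsi_one_zero, logQuotPrimitive, logQuot, log_I_mul hx, log_neg_I_mul hx,
    div_neg] at h
  rw [wigTerm, hargy, h]
  ring

lemma psiTerm_eq_neg_integral (hy : 0 < y.re) (n : ℕ) :
    psiTerm y n = -∫ v in Set.Ioi (0 : ℝ),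
      trapezoidKernel v • logQuotDeriv₂Pair 0 1 (2 * Real.pi * Complex.I / y) n v := by
  have h := logQuotPsi_add_logQuotPsi_neg 0 1 (im_two_pi_I_div_ne_zero hy) n
  have hx := re_two_pi_mul_div_pos hy n
  have harg : ((n : ℂ) + 1) * (2 * Real.pi * Complex.I / y) =
      Complex.I * (2 * Real.pi * (n + 1) / y) := by ring
  have hargy : 2 * Real.pi * Complex.I * ((n : ℂ) + 1) / y =
      Complex.I * (2 * Real.pi * (n + 1) / y) := by ring
  rw [harg] at h
  simp only [logQuotPsi_zero_one, logQuotPrimitive, logQuot, log_I_mul hx, log_neg_I_mul hx] at h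
  rw [psiTerm, hargy, h, log_I_mul hx, log_neg_I_mul hx]
  have hn : (n : ℂ) + 1 ≠ 0 := n.cast_add_one_ne_zero
  field_simp
  ring

lemma summable_wigTerm (hy : 0 < y.re) : Summable (wigTerm y) := by
  rw [funext (wigTerm_eq_integral hy)]
  exact (hasSum_integral_logQuotDeriv₂Pair 1 0 (im_two_pi_I_div_ne_zero hy)).summable.mul_left _

lemma summable_psiTerm (hy : 0 < y.re) : Summable (psiTerm y) := by
  rw [funext (psiTerm_eq_neg_integral hy)]
  exact (hasSum_integral_logQuotDeriv₂Pair 0 1 (im_two_pi_I_div_ne_zero hy)).summable.neg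

lemma tsum_psiTerm_sub_tsum_wigTerm (hy : 0 < y.re) (a : ℂ) :
    ∑' n, psiTerm y n - 2 * a * ∑' n, wigTerm y n = -∫ v in Set.Ioi (0 : ℝ),
      trapezoidKernel v • ∑' n, logQuotDeriv₂Pair a 1 (2 * Real.pi * Complex.I / y) n v := by
  have hζ := im_two_pi_I_div_ne_zero hy
  have hint (a b : ℂ) :=
    integrable_trapezoidKernel_smul (integrableOn_tsum_logQuotDeriv₂Pair a b hζ)
  have hsplit : ∀ v ∈ Set.Ioi (0 : ℝ),
      trapezoidKernel v • ∑' n, logQuotDeriv₂Pair a 1 (2 * Real.pi * Complex.I / y) n v =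
        trapezoidKernel v • ∑' n, logQuotDeriv₂Pair 0 1 (2 * Real.pi * Complex.I / y) n v +
        a * trapezoidKernel v • ∑' n, logQuotDeriv₂Pair 1 0 (2 * Real.pi * Complex.I / y) n v := by
    intro v hv
    rw [mul_smul_comm, ← smul_add, ← tsum_mul_left, ← (summable_logQuotDeriv₂Pair 0 1 hζ
      (le_of_lt hv)).tsum_add ((summable_logQuotDeriv₂Pair 1 0 hζ (le_of_lt hv)).mul_left a)]
    congr 2
    funext n
    simp only [logQuotDeriv₂Pair, logQuotDeriv₂]
    ring
  rw [setIntegral_congr_fun measurableSet_Ioi hsplit,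
    integral_add (hint 0 1) ((hint 1 0).const_mul a), integral_const_mul,
    ← (hasSum_integral_logQuotDeriv₂Pair 0 1 hζ).tsum_eq,
    ← (hasSum_integral_logQuotDeriv₂Pair 1 0 hζ).tsum_eq]
  simp only [psiTerm_eq_neg_integral hy, wigTerm_eq_integral hy, tsum_neg, tsum_mul_left]
  ring

end PsiSeries

lemma analyticAt_Gamma_of_re_pos {s : ℂ} (hs : 0 < s.re) : AnalyticAt ℂ Complex.Gamma s := by
  refine DifferentiableOn.analyticAt (s := {z : ℂ | 0 < z.re}) (fun z hz => ?_)
    ((isOpen_lt continuous_const Complex.continuous_re).mem_nhds hs)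
  refine (Complex.differentiableAt_Gamma z fun m hm => ?_).differentiableWithinAt
  rw [Set.mem_ofPred_eq, hm, Complex.neg_re, Complex.natCast_re] at hz
  linarith [Nat.cast_nonneg (α := ℝ) m]

lemma Gamma_one_add_mul_Gamma_one_sub_mul_sin {s : ℂ} (hs : ‖s‖ < 1) :
    Complex.Gamma (1 + s) * Complex.Gamma (1 - s) * Complex.sin (Real.pi * s) = Real.pi * s := by
  rcases eq_or_ne s 0 with rfl | h₀
  · simp
  have hsin : Complex.sin (Real.pi * s) ≠ 0 := by
    rw [Complex.sin_ne_zero_iff]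
    intro k hk
    obtain rfl : s = k :=
      mul_left_cancel₀ (Complex.ofReal_ne_zero.2 Real.pi_ne_zero) (hk.trans (mul_comm _ _))
    rw [Complex.norm_intCast] at hs
    exact h₀ (by exact_mod_cast Int.abs_lt_one_iff.1 (by exact_mod_cast hs))
  rw [add_comm, Complex.Gamma_add_one s h₀, mul_assoc s, Complex.Gamma_mul_Gamma_one_sub,
    mul_assoc, div_mul_cancel₀ _ hsin, mul_comm]

/- Leibniz for the third derivative of the reflection formula at `0`. -/
lemma iteratedDeriv_two_Gamma_one_add_mul_Gamma_one_sub :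
    iteratedDeriv 2 (fun s => Complex.Gamma (1 + s) * Complex.Gamma (1 - s)) 0 =
      Real.pi ^ 2 / 3 := by
  set G : ℂ → ℂ := fun s => Complex.Gamma (1 + s) * Complex.Gamma (1 - s) with hG
  have hG_smooth : ContDiffAt ℂ 3 G 0 := AnalyticAt.contDiffAt <|
    .mul (.fun_comp (analyticAt_Gamma_of_re_pos (by simp)) (by fun_prop))
      (.fun_comp (analyticAt_Gamma_of_re_pos (by simp)) (by fun_prop))
  have hreflection : (fun s => G s * Complex.sin (Real.pi * s)) =ᶠ[𝓝 0] fun s => Real.pi * s := by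
    filter_upwards [Metric.ball_mem_nhds (0 : ℂ) one_pos] with s hs
    exact Gamma_one_add_mul_Gamma_one_sub_mul_sin (by simpa using hs)
  have hsin (n : ℕ) := iteratedDeriv_comp_const_mul (n := n) Complex.contDiff_sin Real.pi
  have hG_zero : G 0 = 1 := by simp [hG]
  have hleibniz := hreflection.iteratedDeriv_eq 3
  rw [iteratedDeriv_fun_mul hG_smooth (by fun_prop)] at hleibniz
  have hthird : -Real.pi ^ 3 + 3 * iteratedDeriv 2 G 0 * Real.pi = 0 := by
    simpa [Finset.sum_range_succ, hsin, iteratedDeriv_succ, hG_zero] using hleibniz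
  field_simp
  refine mul_right_cancel₀ (Complex.ofReal_ne_zero.2 Real.pi_ne_zero) ?_
  linear_combination hthird

lemma iteratedDeriv_two_Gamma_one :
    iteratedDeriv 2 Complex.Gamma 1 = eulerGamma ^ 2 + Real.pi ^ 2 / 6 := by
  have h := iteratedDeriv_two_Gamma_one_add_mul_Gamma_one_sub
  have hadd : ContDiffAt ℂ 2 (fun s => Complex.Gamma (1 + s)) 0 := AnalyticAt.contDiffAt <|
    .fun_comp (analyticAt_Gamma_of_re_pos (by simp)) (by fun_prop)
  have hsub : ContDiffAt ℂ 2 (fun s => Complex.Gamma (1 - s)) 0 := AnalyticAt.contDiffAt <|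
    .fun_comp (analyticAt_Gamma_of_re_pos (by simp)) (by fun_prop)
  rw [iteratedDeriv_fun_mul hadd hsub] at h
  have hsecond : 2 * iteratedDeriv 2 Complex.Gamma 1 - 2 * eulerGamma ^ 2 = Real.pi ^ 2 / 3 := by
    rw [← h]
    simp [Finset.sum_range_succ, iteratedDeriv_comp_const_add, iteratedDeriv_comp_const_sub,
      iteratedDeriv_one, Complex.hasDerivAt_Gamma_one.deriv, eulerGamma]
    ring
  linear_combination hsecond / 2

section Mellin

variable {c s : ℂ}

lemma isBigO_exp_neg_mul_atTop (hc : 0 < c.re) (a : ℝ) :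
    (fun t : ℝ => Complex.exp (-(c * t))) =O[atTop] fun t => t ^ (-a) := by
  rw [← Asymptotics.isBigO_norm_left]
  simpa [Complex.norm_exp] using (isLittleO_exp_neg_mul_rpow_atTop hc (-a)).isBigO

lemma isBigO_exp_neg_mul_nhdsGT_zero (c : ℂ) :
    (fun t : ℝ => Complex.exp (-(c * t))) =O[𝓝[>] 0] fun t => t ^ (-0 : ℝ) := by
  have hcont : Continuous fun t : ℝ => Complex.exp (-(c * t)) := by fun_prop
  simpa using ((hcont.tendsto 0).mono_left nhdsWithin_le_nhds).isBigO_one ℝ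

lemma mellinConvergent_exp_neg_mul (hc : 0 < c.re) (hs : 0 < s.re) :
    MellinConvergent (fun t : ℝ => Complex.exp (-(c * t))) s :=
  mellinConvergent_of_isBigO_rpow
    (Continuous.locallyIntegrable (by fun_prop) |>.locallyIntegrableOn _)
    (isBigO_exp_neg_mul_atTop hc _) (lt_add_one s.re) (isBigO_exp_neg_mul_nhdsGT_zero c) hs

lemma differentiableAt_mellin_exp_neg_mul (hc : 0 < c.re) (hs : 0 < s.re) :
    DifferentiableAt ℂ (fun c : ℂ => mellin (fun t : ℝ => Complex.exp (-(c * t))) s) c := by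
  have hs' : 0 < (s + 1).re := by simpa using by linarith
  have hc' : 0 < ((c.re / 2 : ℝ) : ℂ).re := by simpa using hc
  have hmeas (c : ℂ) (hc : 0 < c.re) :=
    (mellinConvergent_exp_neg_mul hc hs).aestronglyMeasurable
  have hnhds : {z : ℂ | c.re / 2 < z.re} ∈ 𝓝 c :=
    (isOpen_lt continuous_const Complex.continuous_re).mem_nhds (by simpa using hc)
  refine (hasDerivAt_integral_of_dominated_loc_of_deriv_le
    (F := fun (z : ℂ) (t : ℝ) => (t : ℂ) ^ (s - 1) • Complex.exp (-(z * t)))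
    (F' := fun (z : ℂ) (t : ℝ) => (t : ℂ) ^ (s - 1) • (Complex.exp (-(z * t)) * -(t : ℂ)))
    (bound := fun t : ℝ => ‖(t : ℂ) ^ (s + 1 - 1) • Complex.exp (-(((c.re / 2 : ℝ) : ℂ) * t))‖)
    hnhds (Filter.mem_of_superset hnhds fun z hz => hmeas z ((half_pos hc).trans hz))
    (mellinConvergent_exp_neg_mul hc hs) ?_ ?_
    (mellinConvergent_exp_neg_mul hc' hs').norm ?_).2.differentiableAt
  · refine ((hmeas c hc).mul (f := fun t : ℝ => (t : ℂ) ^ (s - 1) • Complex.exp (-(c * t)))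
      (g := fun t : ℝ => -(t : ℂ)) (by fun_prop)).congr (.of_forall fun t => ?_)
    simp [mul_assoc]
  · refine ae_restrict_of_forall_mem measurableSet_Ioi fun t ht z hz => ?_
    have ht' : (t : ℂ) ≠ 0 := Complex.ofReal_ne_zero.2 (ne_of_gt ht)
    rw [show s + 1 - 1 = s - 1 + 1 by ring, Complex.cpow_add _ _ ht', Complex.cpow_one]
    have hle : c.re / 2 * t ≤ z.re * t := mul_le_mul_of_nonneg_right (le_of_lt hz) (le_of_lt ht)
    simp only [smul_eq_mul, norm_mul, norm_neg, Complex.norm_exp]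
    rw [mul_assoc, mul_comm (Real.exp _), Complex.neg_re, Complex.neg_re, Complex.re_mul_ofReal,
      Complex.re_mul_ofReal, Complex.ofReal_re]
    gcongr
  · exact .of_forall fun t z _ => (hasDerivAt_mul_const (t : ℂ)).fun_neg.cexp.const_mul _

lemma mellin_exp_neg_mul (hc : 0 < c.re) (hs : 0 < s.re) :
    mellin (fun t : ℝ => Complex.exp (-(c * t))) s = c ^ (-s) * Complex.Gamma s := by
  have hopen : IsOpen {z : ℂ | 0 < z.re} := isOpen_lt continuous_const Complex.continuous_re
  have hleft : AnalyticOnNhd ℂ (fun c : ℂ => mellin (fun t : ℝ => Complex.exp (-(c * t))) s)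
      {z : ℂ | 0 < z.re} := DifferentiableOn.analyticOnNhd
    (fun z hz => (differentiableAt_mellin_exp_neg_mul hz hs).differentiableWithinAt) hopen
  have hright : AnalyticOnNhd ℂ (fun c : ℂ => c ^ (-s) * Complex.Gamma s) {z : ℂ | 0 < z.re} :=
    fun z hz => (analyticAt_id.cpow analyticAt_const (.inl hz)).mul analyticAt_const
  have hreal (r : ℝ) (hr : 0 < r) : mellin (fun t : ℝ => Complex.exp (-((r : ℂ) * t))) s =
      (r : ℂ) ^ (-s) * Complex.Gamma s := by
    rw [Complex.cpow_neg, ← Complex.inv_cpow _ _ (by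
      rw [Complex.arg_ofReal_of_nonneg hr.le]; exact Real.pi_ne_zero.symm), ← one_div]
    exact Complex.integral_cpow_mul_exp_neg_mul_Ioi hs hr
  have hcoe : Tendsto ((↑) : ℝ → ℂ) (𝓝[≠] 1) (𝓝[≠] 1) :=
    tendsto_nhdsWithin_iff.2 ⟨(Complex.continuous_ofReal.tendsto' 1 1 rfl).mono_left
      nhdsWithin_le_nhds, eventually_mem_nhdsWithin.mono fun r hr => by simpa using hr⟩
  refine hleft.eqOn_of_preconnected_of_frequently_eq hright
    (convex_halfSpace_re_gt 0).isPreconnected (z₀ := 1) (by simp) (hcoe.frequently ?_) hc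
  refine Eventually.frequently (mem_nhdsWithin_of_mem_nhds ?_)
  filter_upwards [lt_mem_nhds one_pos] with r hr using hreal r hr

lemma hasDerivAt_mellin_exp_neg_mul (hc : 0 < c.re) (hs : 0 < s.re) :
    HasDerivAt (mellin fun t : ℝ => Complex.exp (-(c * t)))
      (c ^ (-s) * (deriv Complex.Gamma s - Complex.log c * Complex.Gamma s)) s := by
  have hc₀ : c ≠ 0 := Complex.ne_zero_of_re_pos hc
  have hcpow := (hasDerivAt_neg s).const_cpow (c := c) (.inl hc₀)
  refine ((hcpow.mul (analyticAt_Gamma_of_re_pos hs).differentiableAt.hasDerivAt).congr_deriv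
    (by ring)).congr_of_eventuallyEq ?_
  filter_upwards [(isOpen_lt continuous_const Complex.continuous_re).mem_nhds hs] with z hz
    using mellin_exp_neg_mul hc hz

lemma mellin_log_smul_exp_neg_mul (hc : 0 < c.re) (hs : 0 < s.re) :
    MellinConvergent (fun t : ℝ => Real.log t • Complex.exp (-(c * t))) s ∧
      mellin (fun t : ℝ => Real.log t • Complex.exp (-(c * t))) s =
        c ^ (-s) * (deriv Complex.Gamma s - Complex.log c * Complex.Gamma s) := by
  have h := mellin_hasDerivAt_of_isBigO_rpow
    ((show Continuous fun t : ℝ => Complex.exp (-(c * t)) by fun_prop).locallyIntegrable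
      |>.locallyIntegrableOn _)
    (isBigO_exp_neg_mul_atTop hc _) (lt_add_one s.re) (isBigO_exp_neg_mul_nhdsGT_zero c) hs
  exact ⟨h.1, h.2.unique (hasDerivAt_mellin_exp_neg_mul hc hs)⟩

lemma mellin_log_smul_log_smul_exp_neg_mul (hc : 0 < c.re) (hs : 0 < s.re) :
    MellinConvergent (fun t : ℝ => Real.log t • Real.log t • Complex.exp (-(c * t))) s ∧
      mellin (fun t : ℝ => Real.log t • Real.log t • Complex.exp (-(c * t))) s =
        c ^ (-s) * (iteratedDeriv 2 Complex.Gamma s - 2 * Complex.log c * deriv Complex.Gamma s +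
          Complex.log c ^ 2 * Complex.Gamma s) := by
  have hmeas : LocallyIntegrableOn (fun t : ℝ => Real.log t • Complex.exp (-(c * t)))
      (Set.Ioi 0) := by
    have hlog : ContinuousOn Real.log (Set.Ioi 0) :=
      Real.continuousOn_log.mono fun t ht => ne_of_gt ht
    have hexp : Continuous fun t : ℝ => Complex.exp (-(c * t)) := by fun_prop
    exact (hlog.smul hexp.continuousOn).locallyIntegrableOn measurableSet_Ioi
  have h := mellin_hasDerivAt_of_isBigO_rpow hmeas
    (isBigO_rpow_top_log_smul (lt_add_one (s.re + 1)) (isBigO_exp_neg_mul_atTop hc _))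
    (lt_add_one s.re)
    (isBigO_rpow_zero_log_smul (half_pos hs) (isBigO_exp_neg_mul_nhdsGT_zero c)) (half_lt_self hs)
  refine ⟨h.1, h.2.unique ?_⟩
  have hΓ := analyticAt_Gamma_of_re_pos hs
  have hcpow := (hasDerivAt_neg s).const_cpow (c := c) (.inl (Complex.ne_zero_of_re_pos hc))
  refine ((hcpow.mul (hΓ.deriv.differentiableAt.hasDerivAt.sub
    (hΓ.differentiableAt.hasDerivAt.const_mul (Complex.log c)))).congr_deriv
    ?_).congr_of_eventuallyEq ?_
  · rw [iteratedDeriv_succ, iteratedDeriv_one, Pi.sub_apply]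
    ring
  · filter_upwards [(isOpen_lt continuous_const Complex.continuous_re).mem_nhds hs] with z hz
      using (mellin_log_smul_exp_neg_mul hc hz).2

lemma integral_log_mul_exp_neg_mul (hc : 0 < c.re) :
    IntegrableOn (fun u : ℝ => Real.log u * Complex.exp (-(c * u))) (Set.Ioi 0) ∧
      ∫ u in Set.Ioi (0 : ℝ), Real.log u * Complex.exp (-(c * u)) = -logQuot eulerGamma 1 c := by
  have h := mellin_log_smul_exp_neg_mul hc (s := 1) (by simp)
  rw [Complex.hasDerivAt_Gamma_one.deriv] at h
  simp only [MellinConvergent, mellin, sub_self, Complex.cpow_zero, one_smul, Complex.real_smul,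
    Complex.cpow_neg_one, Complex.Gamma_one] at h
  refine ⟨h.1, h.2.trans ?_⟩
  rw [logQuot, eulerGamma]
  ring

lemma integral_log_sq_mul_exp_neg_mul (hc : 0 < c.re) :
    IntegrableOn (fun u : ℝ => (Real.log u : ℂ) ^ 2 * Complex.exp (-(c * u))) (Set.Ioi 0) ∧
      ∫ u in Set.Ioi (0 : ℝ), (Real.log u : ℂ) ^ 2 * Complex.exp (-(c * u)) =
        ((eulerGamma + Complex.log c) ^ 2 + Real.pi ^ 2 / 6) / c := by
  have h := mellin_log_smul_log_smul_exp_neg_mul hc (s := 1) (by simp)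
  rw [iteratedDeriv_two_Gamma_one, Complex.hasDerivAt_Gamma_one.deriv] at h
  simp only [MellinConvergent, mellin, sub_self, Complex.cpow_zero, one_smul, Complex.real_smul,
    Complex.cpow_neg_one, Complex.Gamma_one, ← mul_assoc, ← pow_two] at h
  refine ⟨h.1, h.2.trans ?_⟩
  rw [eulerGamma]
  ring

lemma integral_sq_mul_log_mul_exp_neg_mul (hc : 0 < c.re) :
    IntegrableOn (fun u : ℝ => (u : ℂ) ^ 2 * Real.log u * Complex.exp (-(c * u))) (Set.Ioi 0) ∧
      ∫ u in Set.Ioi (0 : ℝ), (u : ℂ) ^ 2 * Real.log u * Complex.exp (-(c * u)) =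
        -logQuotDeriv₂ eulerGamma 1 c := by
  have hthree : (3 : ℂ) = (2 : ℕ) + 1 := by norm_num
  have h := mellin_log_smul_exp_neg_mul hc (s := 3) (by simp)
  rw [hthree, (Complex.hasDerivAt_Gamma_nat 2).deriv, Complex.Gamma_nat_eq_factorial] at h
  simp only [MellinConvergent, mellin, add_sub_cancel_right, Complex.cpow_natCast, smul_eq_mul,
    Complex.real_smul, ← mul_assoc] at h
  refine ⟨h.1, h.2.trans ?_⟩
  have hcpow : c ^ (-((2 : ℕ) + 1 : ℂ)) = (c ^ 3)⁻¹ := by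
    rw [Complex.cpow_neg, ← hthree, Complex.cpow_ofNat]
  have hharmonic : harmonic 2 = 3 / 2 := by norm_num [harmonic, Finset.sum_range_succ]
  rw [hcpow, hharmonic, logQuotDeriv₂, eulerGamma]
  simp only [Nat.factorial]
  push_cast
  ring

end Mellin

/-- The function `u² log u e^{-cu}` on the positive half-line, extended by zero. Poisson summation
applied to it transforms the second derivative of `∑ log j e^{-cj}`; the factor `u²` makes both the
function and its Fourier transform decay fast enough. -/
noncomputable def sqLogExp (c : ℂ) (u : ℝ) : ℂ :=
  (max u 0 * (u * Real.log u) : ℝ) * Complex.exp (-(c * u))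

section Poisson

variable {c y s : ℂ}

lemma sqLogExp_of_nonneg (c : ℂ) {u : ℝ} (hu : 0 ≤ u) :
    sqLogExp c u = (u : ℂ) ^ 2 * Real.log u * Complex.exp (-(c * u)) := by
  rw [sqLogExp, max_eq_left hu]
  push_cast
  ring

lemma sqLogExp_of_nonpos (c : ℂ) {u : ℝ} (hu : u ≤ 0) : sqLogExp c u = 0 := by
  simp [sqLogExp, max_eq_right hu]

lemma continuous_sqLogExp (c : ℂ) : Continuous (sqLogExp c) := by
  have hweight : Continuous fun u : ℝ => max u 0 * (u * Real.log u) :=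
    (continuous_id.max continuous_const).mul Real.continuous_mul_log
  exact (Complex.continuous_ofReal.comp hweight).mul (by fun_prop)

lemma isBigO_sqLogExp_cocompact (hc : 0 < c.re) :
    sqLogExp c =O[cocompact ℝ] fun u => |u| ^ (-(5 / 2) : ℝ) := by
  rw [cocompact_eq_atBot_atTop, Asymptotics.isBigO_sup]
  constructor
  · refine EventuallyEq.trans_isBigO ?_ (Asymptotics.isBigO_zero _ _)
    filter_upwards [eventually_le_atBot 0] with u hu using sqLogExp_of_nonpos c hu
  have hlog := isBigO_rpow_top_log_smul (show (9 / 2 : ℝ) < 5 by norm_num)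
    (isBigO_exp_neg_mul_atTop hc 5)
  have hsq : (fun u : ℝ => u ^ 2) =O[atTop] fun u : ℝ => u ^ (2 : ℝ) := by
    simpa using Asymptotics.isBigO_refl _ _
  refine (hsq.smul hlog).congr' ?_ ?_
  · filter_upwards [eventually_ge_atTop 0] with u hu
    rw [sqLogExp_of_nonneg c hu]
    simp [mul_assoc]
  · filter_upwards [eventually_gt_atTop 0] with u hu
    rw [abs_of_pos hu, smul_eq_mul, ← Real.rpow_add hu]
    norm_num

lemma fourier_sqLogExp (hc : 0 < c.re) (ξ : ℝ) :
    FourierTransform.fourier (sqLogExp c) ξ =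
      -logQuotDeriv₂ eulerGamma 1 (c + 2 * Real.pi * Complex.I * ξ) := by
  have hc' : 0 < (c + 2 * Real.pi * Complex.I * ξ).re := by simpa using hc
  rw [Real.fourier_real_eq_integral_exp_smul, ← (integral_sq_mul_log_mul_exp_neg_mul hc').2,
    ← integral_indicator measurableSet_Ioi]
  refine integral_congr_ae (.of_forall fun u => ?_)
  rcases lt_or_ge 0 u with hu | hu
  · simp only [Set.indicator_of_mem (Set.mem_Ioi.2 hu), sqLogExp_of_nonneg c hu.le, smul_eq_mul]
    rw [mul_left_comm, ← Complex.exp_add]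
    congr 2
    push_cast
    ring
  · simp [Set.indicator_of_notMem (Set.notMem_Ioi.2 hu), sqLogExp_of_nonpos c hu]

lemma isBigO_logQuotDeriv₂_vertical (a b : ℂ) (hc : 0 < c.re) :
    (fun ξ : ℝ => logQuotDeriv₂ a b (c + 2 * Real.pi * Complex.I * ξ)) =O[cocompact ℝ]
      fun ξ => |ξ| ^ (-(5 / 2) : ℝ) := by
  obtain ⟨C, hC₀, hC⟩ := exists_norm_add_mul_log_div_pow_le (2 * a - 3 * b) (2 * b) 3 hc
  refine .of_bound C ?_
  filter_upwards [tendsto_norm_cocompact_atTop.eventually_ge_atTop (|c.im| + 1)] with ξ hξ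
  rw [Real.norm_eq_abs] at hξ
  have hre : c.re ≤ ‖c + 2 * Real.pi * Complex.I * ξ‖ := by
    simpa using Complex.re_le_norm (c + 2 * Real.pi * Complex.I * ξ)
  have him : |ξ| ≤ ‖c + 2 * Real.pi * Complex.I * ξ‖ := by
    refine le_trans ?_ (Complex.abs_im_le_norm _)
    have hsub := abs_sub_abs_le_abs_sub (2 * Real.pi * ξ) (-c.im)
    rw [abs_mul, abs_of_pos Real.two_pi_pos, abs_neg, sub_neg_eq_add,
      add_comm (2 * Real.pi * ξ)] at hsub
    have him_eq : (c + 2 * Real.pi * Complex.I * ξ).im = c.im + 2 * Real.pi * ξ := by simp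
    rw [him_eq]
    nlinarith [Real.pi_gt_three, abs_nonneg c.im]
  have hexp : (1 / 2 - (3 : ℕ) : ℝ) = -(5 / 2) := by norm_num
  have hpos : 0 < |ξ| := by linarith [abs_nonneg c.im]
  rw [Real.norm_of_nonneg (by positivity), ← hexp]
  refine (hC _ hre).trans (mul_le_mul_of_nonneg_left ?_ hC₀)
  exact Real.rpow_le_rpow_of_nonpos hpos him (by norm_num)

lemma tsum_int_sqLogExp (c : ℂ) :
    ∑' n : ℤ, sqLogExp c n = ∑' k : ℕ, (k : ℂ) ^ 2 * Real.log k * Complex.exp (-(c * k)) := by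
  have hsupport : Function.support (fun n : ℤ => sqLogExp c n) ⊆ Set.range ((↑) : ℕ → ℤ) := by
    intro n hn
    have hpos : 0 < n := by
      by_contra! hle
      exact hn (sqLogExp_of_nonpos c (by exact_mod_cast hle))
    exact ⟨n.toNat, Int.toNat_of_nonneg hpos.le⟩
  rw [← Nat.cast_injective.tsum_eq hsupport]
  refine tsum_congr fun k => ?_
  simpa using sqLogExp_of_nonneg c (Nat.cast_nonneg k)

lemma tsum_int_sqLogExp_eq_neg_tsum (hc : 0 < c.re) :
    ∑' n : ℤ, sqLogExp c n =
      -∑' n : ℤ, logQuotDeriv₂ eulerGamma 1 (c + 2 * Real.pi * Complex.I * n) := by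
  have hdecay := (isBigO_logQuotDeriv₂_vertical eulerGamma 1 hc).neg_left
  rw [← funext (fourier_sqLogExp hc)] at hdecay
  have hpoisson := Real.tsum_eq_tsum_fourier_of_rpow_decay (continuous_sqLogExp c)
    (show (1 : ℝ) < 5 / 2 by norm_num) (isBigO_sqLogExp_cocompact hc) hdecay 0
  simpa [fourier_sqLogExp hc, tsum_neg] using hpoisson

lemma tsum_sq_mul_log_mul_exp_add_logQuotDeriv₂ (hc : 0 < c.re) :
    ∑' k : ℕ, (k : ℂ) ^ 2 * Real.log k * Complex.exp (-(c * k)) + logQuotDeriv₂ eulerGamma 1 c =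
      -∑' n : ℕ, (logQuotDeriv₂ eulerGamma 1 (c + 2 * Real.pi * Complex.I * (n + 1)) +
        logQuotDeriv₂ eulerGamma 1 (c + 2 * Real.pi * Complex.I * -(n + 1))) := by
  set f : ℤ → ℂ := fun n => logQuotDeriv₂ eulerGamma 1 (c + 2 * Real.pi * Complex.I * n) with hf
  have hsum : Summable f := summable_of_isBigO (Real.summable_abs_int_rpow (by norm_num))
    ((isBigO_logQuotDeriv₂_vertical eulerGamma 1 hc).comp_tendsto Int.tendsto_coe_cofinite)
  have hpos : Summable fun n : ℕ => f (n + 1) :=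
    hsum.comp_injective fun m n h => by simpa using h
  have hneg : Summable fun n : ℕ => f (-(n + 1)) :=
    hsum.comp_injective fun m n h => by simpa using h
  have hpair : ∑' n : ℕ, (f (n + 1) + f (-(n + 1))) =
      ∑' n : ℕ, (logQuotDeriv₂ eulerGamma 1 (c + 2 * Real.pi * Complex.I * (n + 1)) +
        logQuotDeriv₂ eulerGamma 1 (c + 2 * Real.pi * Complex.I * -(n + 1))) := by
    simp [hf]
  have hzero : f 0 = logQuotDeriv₂ eulerGamma 1 c := by simp [hf]
  rw [← tsum_int_sqLogExp, tsum_int_sqLogExp_eq_neg_tsum hc,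
    tsum_of_add_one_of_neg_add_one hpos hneg, ← hpair, hpos.tsum_add hneg, hzero]
  ring

lemma log_mul_of_re_pos (hy : 0 < y.re) (hys : 0 < (y * s).re) :
    Complex.log (y * s) = Complex.log y + Complex.log s := by
  have hy₀ := Complex.ne_zero_of_re_pos hy
  have harg_y := abs_lt.1 (Complex.abs_arg_lt_pi_div_two_iff.2 (.inl hy))
  have harg_ys := abs_lt.1 (Complex.abs_arg_lt_pi_div_two_iff.2 (.inl hys))
  have hne : y.arg ≠ Real.pi := by linarith [Real.pi_pos]
  have hlog := Complex.log_mul (x := y * s) (y := y⁻¹) (Complex.ne_zero_of_re_pos hys)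
    (inv_ne_zero hy₀) (by
      rw [Complex.arg_inv, if_neg hne]
      constructor <;> linarith)
  rw [Complex.log_inv _ hne, mul_comm y s, mul_inv_cancel_right₀ hy₀] at hlog
  rw [hlog, mul_comm]
  ring

lemma logQuot_mul (a b : ℂ) (hy : 0 < y.re) (hys : 0 < (y * s).re) :
    logQuot a b (y * s) = logQuot (a + b * Complex.log y) b s / y := by
  simp only [logQuot, log_mul_of_re_pos hy hys]
  field_simp
  ring

lemma logQuotDeriv₂_mul (a b : ℂ) (hy : 0 < y.re) (hys : 0 < (y * s).re) :
    logQuotDeriv₂ a b (y * s) = logQuotDeriv₂ (a + b * Complex.log y) b s / y ^ 3 := by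
  simp only [logQuotDeriv₂, log_mul_of_re_pos hy hys]
  field_simp
  ring

lemma logQuotDeriv₂_mul_add_two_pi_I_mul (hy : 0 < y.re) {v : ℝ} (hv : 0 < v) (a b : ℂ) (t : ℝ) :
    logQuotDeriv₂ a b (y * v + 2 * Real.pi * Complex.I * t) =
      logQuotDeriv₂ (a + b * Complex.log y) b (v + t * (2 * Real.pi * Complex.I / y)) / y ^ 3 := by
  have hy₀ := Complex.ne_zero_of_re_pos hy
  have hfactor : y * v + 2 * Real.pi * Complex.I * t =
      y * (v + t * (2 * Real.pi * Complex.I / y)) := by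
    field_simp
  rw [hfactor, logQuotDeriv₂_mul _ _ hy (by rw [← hfactor]; simpa using mul_pos hy hv)]

lemma tsum_logQuotDeriv₂Pair_eq (hy : 0 < y.re) {v : ℝ} (hv : 0 < v) :
    ∑' n : ℕ, logQuotDeriv₂Pair (eulerGamma + Complex.log y) 1 (2 * Real.pi * Complex.I / y) n v =
      -y ^ 3 * (∑' k : ℕ, (k : ℂ) ^ 2 * Real.log k * Complex.exp (-(y * v * k)) +
        logQuotDeriv₂ eulerGamma 1 (y * v)) := by
  have hy₀ := Complex.ne_zero_of_re_pos hy
  have hyv : 0 < (y * v).re := by simpa using mul_pos hy hv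
  rw [tsum_sq_mul_log_mul_exp_add_logQuotDeriv₂ hyv, neg_mul_neg, ← tsum_mul_left]
  refine tsum_congr fun n => ?_
  have hpos := logQuotDeriv₂_mul_add_two_pi_I_mul hy hv eulerGamma 1 (n + 1)
  have hneg := logQuotDeriv₂_mul_add_two_pi_I_mul hy hv eulerGamma 1 (-(n + 1))
  push_cast at hpos hneg
  rw [hpos, hneg, one_mul, ← add_div, mul_div_cancel₀ _ (pow_ne_zero 3 hy₀), logQuotDeriv₂Pair,
    mul_neg, neg_mul]

end Poisson

section ExpSeries

/-- A sequence growing more slowly than every exponential: the coefficient condition under which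
`expSeries b` converges on the right half-plane. -/
def IsSubexponential (b : ℕ → ℂ) : Prop :=
  ∀ δ : ℝ, 0 < δ → Summable fun j : ℕ => ‖b j‖ * Real.exp (-(δ * j))

/-- The power series in `e^{-w}` with coefficients `b`. -/
noncomputable def expSeries (b : ℕ → ℂ) (w : ℂ) : ℂ := ∑' j : ℕ, b j * Complex.exp (-(w * j))

variable {b b' : ℕ → ℂ} {w y : ℂ}

lemma isSubexponential_one : IsSubexponential 1 := by
  intro δ hδ
  refine (summable_geometric_of_lt_one (Real.exp_pos (-δ)).le
    (Real.exp_lt_one_iff.2 (neg_neg_of_pos hδ))).congr fun j => ?_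
  rw [← Real.exp_nat_mul, Pi.one_apply, norm_one, one_mul, mul_neg, mul_comm]

lemma re_mul_natCast (w : ℂ) (j : ℕ) : (w * j).re = w.re * j := by simp

namespace IsSubexponential

lemma mono (hb : IsSubexponential b) (hle : ∀ j, ‖b' j‖ ≤ ‖b j‖) : IsSubexponential b' :=
  fun δ hδ => (hb δ hδ).of_nonneg_of_le (fun j => by positivity) fun j => by
    gcongr
    exact hle j

lemma neg_natCast_mul (hb : IsSubexponential b) : IsSubexponential fun j => -j * b j := by
  intro δ hδ
  refine ((hb (δ / 2) (half_pos hδ)).mul_left (2 / δ)).of_nonneg_of_le (fun j => by positivity)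
    fun j => ?_
  have hle : (j : ℝ) ≤ 2 / δ * Real.exp (δ / 2 * j) := by
    rw [div_mul_eq_mul_div, le_div_iff₀ hδ]
    linarith [Real.add_one_le_exp (δ / 2 * j)]
  have hexp : Real.exp (δ / 2 * j) * Real.exp (-(δ * j)) = Real.exp (-(δ / 2 * j)) := by
    rw [← Real.exp_add]
    ring_nf
  calc ‖-(j : ℂ) * b j‖ * Real.exp (-(δ * j)) = j * ‖b j‖ * Real.exp (-(δ * j)) := by simp
    _ ≤ 2 / δ * Real.exp (δ / 2 * j) * ‖b j‖ * Real.exp (-(δ * j)) := by gcongr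
    _ = 2 / δ * (‖b j‖ * Real.exp (-(δ / 2 * j))) := by
      rw [← hexp]
      ring

lemma norm_mul_exp_le (b : ℕ → ℂ) {δ : ℝ} (hw : δ ≤ w.re) (j : ℕ) :
    ‖b j * Complex.exp (-(w * j))‖ ≤ ‖b j‖ * Real.exp (-(δ * j)) := by
  rw [norm_mul, Complex.norm_exp, Complex.neg_re, re_mul_natCast]
  gcongr

lemma summable (hb : IsSubexponential b) (hw : 0 < w.re) :
    Summable fun j : ℕ => b j * Complex.exp (-(w * j)) :=
  .of_norm_bounded (hb w.re hw) (norm_mul_exp_le b le_rfl)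

lemma hasDerivAt_expSeries (hb : IsSubexponential b) (hw : 0 < w.re) :
    HasDerivAt (expSeries b) (expSeries (fun j => -j * b j) w) w := by
  have hmem : w.re / 2 < w.re := half_lt_self hw
  refine hasDerivAt_tsum_of_isPreconnected (t := {s : ℂ | w.re / 2 < s.re}) (y₀ := w)
    (g := fun (j : ℕ) s => b j * Complex.exp (-(s * j)))
    (g' := fun (j : ℕ) s => -j * b j * Complex.exp (-(s * j)))
    (hb.neg_natCast_mul _ (half_pos hw)) (isOpen_lt continuous_const Complex.continuous_re)
    (convex_halfSpace_re_gt _).isPreconnected (fun j s _ => ?_)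
    (fun j s hs => norm_mul_exp_le (fun j => -j * b j) (le_of_lt hs) j) hmem (hb.summable hw) hmem
  refine ((((hasDerivAt_id s).mul_const (j : ℂ)).fun_neg.cexp).const_mul (b j)).congr_deriv ?_
  simp only [id]
  ring

lemma tendsto_expSeries_mul_natCast (hb : IsSubexponential b) (hb₀ : b 0 = 0) (hy : 0 < y.re) :
    Tendsto (fun N : ℕ => expSeries b (y * N)) atTop (𝓝 0) := by
  have hle (N : ℕ) (hN : 1 ≤ N) : y.re ≤ (y * N).re := by
    rw [re_mul_natCast]
    exact le_mul_of_one_le_right hy.le (by exact_mod_cast hN)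
  have h := tendsto_tsum_of_dominated_convergence (𝓕 := atTop)
    (f := fun N j : ℕ => b j * Complex.exp (-(y * N * j))) (g := fun _ => 0) (hb y.re hy)
    (fun j => ?_) ((eventually_ge_atTop 1).mono fun N hN => norm_mul_exp_le b (hle N hN))
  · simpa [expSeries] using h
  · rcases j.eq_zero_or_pos with rfl | hj
    · simp [hb₀]
    · have hre : Tendsto (fun N : ℕ => (-(y * N * j)).re) atTop atBot := by
        simp only [Complex.neg_re, re_mul_natCast]
        exact tendsto_neg_atTop_atBot.comp ((tendsto_natCast_atTop_atTop.const_mul_atTop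
          hy).atTop_mul_const (Nat.cast_pos.2 hj))
      simpa using (Complex.tendsto_exp_comap_re_atBot.comp (tendsto_comap_iff.2 hre)).const_mul
        (b j)

end IsSubexponential

lemma isSubexponential_log : IsSubexponential fun j => Complex.log j := by
  refine isSubexponential_one.neg_natCast_mul.mono fun j => ?_
  rw [← Complex.natCast_log, Complex.norm_real, Real.norm_of_nonneg (Real.log_natCast_nonneg j)]
  simpa using Real.log_le_self j.cast_nonneg

lemma isSubexponential_logQuot_zero_one : IsSubexponential fun j => logQuot 0 1 j := by
  refine isSubexponential_log.mono fun j => ?_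
  rw [logQuot, zero_add, one_mul, norm_div, Complex.norm_natCast]
  rcases j.eq_zero_or_pos with rfl | hj
  · simp
  · exact div_le_self (norm_nonneg _) (by exact_mod_cast hj)

end ExpSeries

section LogSeries

/-- The series `∑ log j e^{-jw}` minus its polar part at `w = 0`. -/
noncomputable def logSeries (w : ℂ) : ℂ :=
  expSeries (fun j => Complex.log j) w + logQuot eulerGamma 1 w

/-- The derivative of `logSeries` on the right half-plane. -/
noncomputable def logSeriesDeriv (w : ℂ) : ℂ :=
  expSeries (fun j => -j * Complex.log j) w + logQuotDeriv eulerGamma 1 w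

/-- An antiderivative of `logSeries` on the right half-plane. -/
noncomputable def logSeriesPrimitive (w : ℂ) : ℂ :=
  logQuotPrimitive eulerGamma 1 w - expSeries (fun j => logQuot 0 1 j) w

variable {w y : ℂ}

lemma hasDerivAt_logSeries (hw : 0 < w.re) : HasDerivAt logSeries (logSeriesDeriv w) w :=
  (isSubexponential_log.hasDerivAt_expSeries hw).add (hasDerivAt_logQuot _ _ (.inl hw))

lemma hasDerivAt_logSeriesDeriv (hw : 0 < w.re) :
    HasDerivAt logSeriesDeriv
      (expSeries (fun j => j ^ 2 * Complex.log j) w + logQuotDeriv₂ eulerGamma 1 w) w := by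
  have hcoeff : (fun j : ℕ => -(j : ℂ) * (-j * Complex.log j)) =
      fun j : ℕ => j ^ 2 * Complex.log j :=
    funext fun j => by ring
  exact hcoeff ▸ (isSubexponential_log.neg_natCast_mul.hasDerivAt_expSeries hw).add
    (hasDerivAt_logQuotDeriv _ _ (.inl hw))

lemma hasDerivAt_logSeriesPrimitive (hw : 0 < w.re) :
    HasDerivAt logSeriesPrimitive (logSeries w) w := by
  have hcoeff : (fun j : ℕ => -(j : ℂ) * logQuot 0 1 j) = fun j : ℕ => -Complex.log j := by
    funext j
    rcases eq_or_ne (j : ℂ) 0 with hj | hj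
    · simp [hj]
    · simp only [logQuot]
      field_simp
      ring
  refine ((hasDerivAt_logQuotPrimitive _ _ (.inl hw)).sub
    (isSubexponential_logQuot_zero_one.hasDerivAt_expSeries hw)).congr_deriv ?_
  rw [hcoeff, logSeries]
  simp only [expSeries, neg_mul, tsum_neg]
  ring

end LogSeries

section AbelLimit

/-- The sector `‖w‖ ≤ R Re w` of the right half-plane, in which the Abel limits at `0` are taken. -/
def rightSector (R : ℝ) : Set ℂ := {w | 0 < w.re ∧ ‖w‖ ≤ R * w.re}

/-- `f` is twice continuously differentiable on `[1, ∞)` with derivatives `f'` and `f''`, and each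
derivative gains a factor `u⁻¹` over the bound `O(u^{1/2})` of `f`. The Euler–Maclaurin
remainders of `f(u) e^{-wu}` are then dominated uniformly in `w`. -/
structure HasSqrtGrowth (f f' f'' : ℝ → ℂ) : Prop where
  hasDerivAt : ∀ u : ℝ, 1 ≤ u → HasDerivAt f (f' u) u
  hasDerivAt_deriv : ∀ u : ℝ, 1 ≤ u → HasDerivAt f' (f'' u) u
  continuousOn_deriv₂ : ContinuousOn f'' (Set.Ici 1)
  exists_norm_le : ∃ C : ℝ, 0 ≤ C ∧ ∀ u : ℝ, 1 ≤ u → ‖f u‖ ≤ C * u ^ (1 / 2 : ℝ)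
  exists_norm_deriv_le : ∃ C : ℝ, 0 ≤ C ∧ ∀ u : ℝ, 1 ≤ u → ‖f' u‖ ≤ C * u ^ (-(1 / 2) : ℝ)
  exists_norm_deriv₂_le : ∃ C : ℝ, 0 ≤ C ∧ ∀ u : ℝ, 1 ≤ u → ‖f'' u‖ ≤ C * u ^ (-(3 / 2) : ℝ)

/-- The second derivative of `f(u) e^{-wu}`, in terms of `f`, `f'` and `f''`. -/
noncomputable def expTwistDeriv₂ (f f' f'' : ℝ → ℂ) (w : ℂ) (u : ℝ) : ℂ :=
  (f'' u - 2 * w * f' u + w ^ 2 * f u) * Complex.exp (-(w * u))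

variable {f f' f'' : ℝ → ℂ} {w y : ℂ} {R : ℝ}

lemma hasDerivAt_exp_neg_mul_ofReal (w : ℂ) (u : ℝ) :
    HasDerivAt (fun u : ℝ => Complex.exp (-(w * u))) (-w * Complex.exp (-(w * u))) u := by
  refine (((hasDerivAt_id (u : ℂ)).const_mul w).fun_neg.cexp.comp_ofReal).congr_deriv ?_
  simp only [id]
  ring

lemma tendsto_mul_ofReal_rightSector (hy : 0 < y.re) :
    Tendsto (fun v : ℝ => y * v) (𝓝[>] 0) (𝓝[rightSector (‖y‖ / y.re)] 0) := by
  refine tendsto_nhdsWithin_iff.2 ⟨?_, ?_⟩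
  · have hcont : Continuous fun v : ℝ => y * (v : ℂ) := by fun_prop
    simpa using (hcont.tendsto 0).mono_left nhdsWithin_le_nhds
  · filter_upwards [self_mem_nhdsWithin] with v hv
    have hv₀ : 0 < v := hv
    refine ⟨by simpa using mul_pos hy hv, le_of_eq ?_⟩
    rw [norm_mul, Complex.norm_real, Real.norm_of_nonneg hv₀.le, Complex.re_mul_ofReal]
    field_simp

lemma mul_exp_neg_le_one (x : ℝ) : x * Real.exp (-x) ≤ 1 := by
  rw [Real.exp_neg, ← div_eq_mul_inv, div_le_one (Real.exp_pos x)]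
  linarith [Real.add_one_le_exp x]

lemma sq_mul_exp_neg_le_two {x : ℝ} (hx : 0 ≤ x) : x ^ 2 * Real.exp (-x) ≤ 2 := by
  rw [Real.exp_neg, ← div_eq_mul_inv, div_le_iff₀ (Real.exp_pos x)]
  linarith [Real.quadratic_le_exp_of_nonneg hx]

namespace HasSqrtGrowth

lemma continuousOn (h : HasSqrtGrowth f f' f'') : ContinuousOn f (Set.Ici 1) :=
  fun u hu => (h.hasDerivAt u hu).continuousAt.continuousWithinAt

lemma continuousOn_expTwistDeriv₂ (h : HasSqrtGrowth f f' f'') (w : ℂ) :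
    ContinuousOn (expTwistDeriv₂ f f' f'' w) (Set.Ici 1) := by
  have hf' : ContinuousOn f' (Set.Ici 1) :=
    fun u hu => (h.hasDerivAt_deriv u hu).continuousAt.continuousWithinAt
  exact ((h.continuousOn_deriv₂.sub (continuousOn_const.mul hf')).add
    (continuousOn_const.mul h.continuousOn)).mul (Continuous.continuousOn (by fun_prop))

lemma exists_norm_expTwistDeriv₂_le (h : HasSqrtGrowth f f' f'') (R : ℝ) :
    ∃ C : ℝ, ∀ w ∈ rightSector R, ∀ u : ℝ, 1 ≤ u →
      ‖expTwistDeriv₂ f f' f'' w u‖ ≤ C * u ^ (-(3 / 2) : ℝ) := by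
  obtain ⟨C₀, hC₀, hf⟩ := h.exists_norm_le
  obtain ⟨C₁, hC₁, hf'⟩ := h.exists_norm_deriv_le
  obtain ⟨C₂, hC₂, hf''⟩ := h.exists_norm_deriv₂_le
  refine ⟨C₂ + 2 * R * C₁ + 2 * R ^ 2 * C₀, fun w ⟨hw, hwR⟩ u hu => ?_⟩
  have h₀ := hf u hu
  have h₁ := hf' u hu
  have h₂ := hf'' u hu
  have hu₀ : 0 < u := one_pos.trans_le hu
  have hR : 0 ≤ R := nonneg_of_mul_nonneg_left ((norm_nonneg w).trans hwR) hw
  set p := u ^ (-(3 / 2) : ℝ)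
  have hp : 0 ≤ p := by positivity
  have hp₁ : u ^ (-(1 / 2) : ℝ) = u * p := by
    rw [← Real.rpow_one_add' hu₀.le (by norm_num)]
    norm_num
  have hp₀ : u ^ (1 / 2 : ℝ) = u ^ 2 * p := by
    rw [← Real.rpow_natCast, ← Real.rpow_add hu₀]
    norm_num
  rw [hp₀] at h₀
  rw [hp₁] at h₁
  set x := w.re * u with hx
  have hx₀ : 0 ≤ x := by positivity
  have hexp : ‖Complex.exp (-(w * u))‖ = Real.exp (-x) := by simp [Complex.norm_exp, hx]
  calc ‖expTwistDeriv₂ f f' f'' w u‖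
      ≤ (‖f'' u‖ + 2 * ‖w‖ * ‖f' u‖ + ‖w‖ ^ 2 * ‖f u‖) * Real.exp (-x) := by
        rw [expTwistDeriv₂, norm_mul, hexp]
        gcongr
        refine (norm_add_le _ _).trans (add_le_add ((norm_sub_le _ _).trans ?_) ?_) <;> simp
    _ ≤ (C₂ * p + 2 * (R * w.re) * (C₁ * (u * p)) + (R * w.re) ^ 2 * (C₀ * (u ^ 2 * p))) *
          Real.exp (-x) := by gcongr
    _ = p * (C₂ * Real.exp (-x) + 2 * R * C₁ * (x * Real.exp (-x)) +
          R ^ 2 * C₀ * (x ^ 2 * Real.exp (-x))) := by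
        rw [hx]
        ring
    _ ≤ p * (C₂ * 1 + 2 * R * C₁ * 1 + R ^ 2 * C₀ * 2) := by
        have hexp_le : Real.exp (-x) ≤ 1 := Real.exp_le_one_iff.2 (neg_nonpos.2 hx₀)
        gcongr
        exacts [mul_exp_neg_le_one x, sq_mul_exp_neg_le_two hx₀]
    _ = _ := by ring

lemma integrableOn_mul_exp (h : HasSqrtGrowth f f' f'') (hw : 0 < w.re) :
    IntegrableOn (fun u : ℝ => f u * Complex.exp (-(w * u))) (Set.Ioi 1) := by
  obtain ⟨C, -, hC⟩ := h.exists_norm_le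
  have hcont : ContinuousOn (fun u : ℝ => f u * Complex.exp (-(w * u))) (Set.Ici 1) :=
    h.continuousOn.fun_mul (Continuous.continuousOn (by fun_prop))
  have hf : f =O[atTop] fun u : ℝ => Real.exp (w.re / 2 * u) :=
    (Asymptotics.IsBigO.of_bound C ((eventually_ge_atTop 1).mono fun u hu => by
      rw [Real.norm_of_nonneg (by positivity)]
      exact hC u hu)).trans (isLittleO_rpow_exp_pos_mul_atTop (1 / 2) (half_pos hw)).isBigO
  have hdecay : (fun u : ℝ => f u * Complex.exp (-(w * u))) =O[atTop]
      fun u => Real.exp (-(w.re / 2) * u) := by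
    refine (hf.mul (Asymptotics.isBigO_refl _ _).norm_right).congr_right fun u => ?_
    rw [Complex.norm_exp, Complex.neg_re, Complex.re_mul_ofReal, ← Real.exp_add]
    ring_nf
  exact ((hcont.locallyIntegrableOn measurableSet_Ici).integrableOn_of_isBigO_atTop hdecay
    ⟨Set.Ioi 0, Ioi_mem_atTop 0, exp_neg_integrableOn_Ioi 0 (half_pos hw)⟩).mono_set
    Set.Ioi_subset_Ici_self

lemma integrableOn_of_norm_le {C : ℝ} {g : ℝ → ℂ} (hg : ContinuousOn g (Set.Ici 1))
    (hle : ∀ u : ℝ, 1 ≤ u → ‖g u‖ ≤ C * u ^ (-(3 / 2) : ℝ)) : IntegrableOn g (Set.Ioi 1) :=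
  ((integrableOn_Ioi_rpow_of_lt (by norm_num) one_pos).const_mul C).mono'
    ((hg.mono Set.Ioi_subset_Ici_self).aestronglyMeasurable measurableSet_Ioi)
    ((ae_restrict_iff' measurableSet_Ioi).2 (.of_forall fun u hu => hle u (le_of_lt hu)))

lemma integral_trapezoidKernel_eq (h : HasSqrtGrowth f f' f'') {K : ℂ}
    (hK : Tendsto (fun n : ℕ => ∑ k ∈ Finset.range n, f (1 + k + 1) -
      (∫ u in (1 : ℝ)..1 + n, f u) - (1 / 2 : ℝ) • (f (1 + n) - f 1)) atTop (𝓝 K)) :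
    ∫ u in Set.Ioi (1 : ℝ), trapezoidKernel u • f'' u = K := by
  obtain ⟨C, -, hC⟩ := h.exists_norm_deriv₂_le
  have hEM := tendsto_sum_range_succ_sub_integral 1 (by simpa using h.continuousOn)
    (fun u hu => h.hasDerivAt u (le_of_lt (by simpa using hu)))
    (fun u hu => h.hasDerivAt_deriv u (le_of_lt (by simpa using hu)))
    (by simpa using h.continuousOn_deriv₂)
    (by simpa using integrableOn_of_norm_le h.continuousOn_deriv₂ hC)
  simp only [Nat.cast_one] at hEM
  exact tendsto_nhds_unique hEM hK

lemma expSeries_sub_integral (h : HasSqrtGrowth f f' f'') (hf₀ : f 0 = 0) (hf₁ : f 1 = 0)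
    (hf : IsSubexponential fun j => f j) (hw : 0 < w.re) :
    expSeries (fun j => f j) w - ∫ u in Set.Ioi (1 : ℝ), f u * Complex.exp (-(w * u)) =
      ∫ u in Set.Ioi (1 : ℝ), trapezoidKernel u • expTwistDeriv₂ f f' f'' w u := by
  set g : ℝ → ℂ := fun u => f u * Complex.exp (-(w * u)) with hg
  have hg' (u : ℝ) (hu : 1 ≤ u) :
      HasDerivAt g ((f' u - w * f u) * Complex.exp (-(w * u))) u :=
    ((h.hasDerivAt u hu).fun_mul (hasDerivAt_exp_neg_mul_ofReal w u)).congr_deriv (by ring)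
  have hg'' (u : ℝ) (hu : 1 ≤ u) :
      HasDerivAt (fun u : ℝ => (f' u - w * f u) * Complex.exp (-(w * u)))
        (expTwistDeriv₂ f f' f'' w u) u := by
    refine (((h.hasDerivAt_deriv u hu).fun_sub ((h.hasDerivAt u hu).const_mul w)).fun_mul
      (hasDerivAt_exp_neg_mul_ofReal w u)).congr_deriv ?_
    rw [expTwistDeriv₂]
    ring
  obtain ⟨C, hC⟩ := h.exists_norm_expTwistDeriv₂_le (‖w‖ / w.re)
  have hmem : w ∈ rightSector (‖w‖ / w.re) := ⟨hw, (div_mul_cancel₀ _ hw.ne').ge⟩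
  have hcont : ContinuousOn g (Set.Ici 1) :=
    fun u hu => (hg' u hu).continuousAt.continuousWithinAt
  have hEM := tendsto_sum_range_succ_sub_integral 1 (by simpa using hcont)
    (fun u hu => hg' u (le_of_lt (by simpa using hu)))
    (fun u hu => hg'' u (le_of_lt (by simpa using hu)))
    (by simpa using h.continuousOn_expTwistDeriv₂ w)
    (by simpa using integrableOn_of_norm_le (h.continuousOn_expTwistDeriv₂ w) (hC w hmem))
  simp only [Nat.cast_one] at hEM
  have hsum := (hf.summable hw).hasSum.tendsto_sum_nat.comp (tendsto_add_atTop_nat 2)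
  have hterm := (hf.summable hw).tendsto_atTop_zero.comp (tendsto_add_atTop_nat 1)
  have hint := intervalIntegral_tendsto_integral_Ioi 1 (h.integrableOn_mul_exp hw)
    (tendsto_atTop_add_const_left _ 1 tendsto_natCast_atTop_atTop)
  have hlim := (hsum.sub hint).sub (hterm.const_smul (1 / 2 : ℝ))
  rw [smul_zero, sub_zero] at hlim
  refine tendsto_nhds_unique (hlim.congr fun n => ?_) hEM
  simp [Finset.sum_range_succ', hg, hf₀, hf₁, add_comm (1 : ℝ)]

lemma tendsto_expSeries_sub_integral (h : HasSqrtGrowth f f' f'') (hf₀ : f 0 = 0)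
    (hf₁ : f 1 = 0) (hf : IsSubexponential fun j => f j) {K : ℂ}
    (hK : Tendsto (fun n : ℕ => ∑ k ∈ Finset.range n, f (1 + k + 1) -
      (∫ u in (1 : ℝ)..1 + n, f u) - (1 / 2 : ℝ) • (f (1 + n) - f 1)) atTop (𝓝 K)) :
    Tendsto (fun w => expSeries (fun j => f j) w -
        ∫ u in Set.Ioi (1 : ℝ), f u * Complex.exp (-(w * u))) (𝓝[rightSector R] 0) (𝓝 K) := by
  obtain ⟨C, hC⟩ := h.exists_norm_expTwistDeriv₂_le R
  rw [← h.integral_trapezoidKernel_eq hK]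
  have hmeas (w : ℂ) := ((h.continuousOn_expTwistDeriv₂ w).mono
    Set.Ioi_subset_Ici_self).aestronglyMeasurable (μ := volume) measurableSet_Ioi
  have hpointwise (u : ℝ) : Tendsto (fun w => trapezoidKernel u • expTwistDeriv₂ f f' f'' w u)
      (𝓝[rightSector R] 0) (𝓝 (trapezoidKernel u • f'' u)) := by
    have hcont : Continuous fun w => trapezoidKernel u • expTwistDeriv₂ f f' f'' w u := by
      simp only [expTwistDeriv₂]
      fun_prop
    simpa [expTwistDeriv₂] using (hcont.tendsto 0).mono_left nhdsWithin_le_nhds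
  refine (tendsto_integral_filter_of_dominated_convergence
    (fun u => C * u ^ (-(3 / 2) : ℝ))
    (.of_forall fun w => measurable_trapezoidKernel.aestronglyMeasurable.smul (hmeas w)) ?_
    ((integrableOn_Ioi_rpow_of_lt (by norm_num) one_pos).const_mul C)
    (.of_forall hpointwise)).congr' ?_
  · filter_upwards [self_mem_nhdsWithin] with w hw
    exact (ae_restrict_iff' measurableSet_Ioi).2 (.of_forall fun u hu =>
      (norm_trapezoidKernel_smul_le u _).trans (hC w hw u (le_of_lt hu)))
  · filter_upwards [self_mem_nhdsWithin] with w hw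
    exact (h.expSeries_sub_integral hf₀ hf₁ hf hw.1).symm

end HasSqrtGrowth

end AbelLimit

section LogAbelLimits

variable {f : ℝ → ℂ} {w : ℂ} {R : ℝ}

lemma exists_norm_add_mul_log_div_pow_ofReal_le (a b : ℂ) (k : ℕ) {p : ℝ} (hp : 1 / 2 - k ≤ p) :
    ∃ C : ℝ, 0 ≤ C ∧ ∀ u : ℝ, 1 ≤ u →
      ‖(a + b * Complex.log u) / (u : ℂ) ^ k‖ ≤ C * u ^ p := by
  obtain ⟨C, hC₀, hC⟩ := exists_norm_add_mul_log_div_pow_le a b k one_pos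
  refine ⟨C, hC₀, fun u hu => ?_⟩
  have hnorm : ‖(u : ℂ)‖ = u := by
    rw [Complex.norm_real, Real.norm_of_nonneg (zero_le_one.trans hu)]
  calc _ ≤ C * ‖(u : ℂ)‖ ^ (1 / 2 - k : ℝ) := hC u (by rwa [hnorm])
    _ ≤ C * u ^ p := by
      rw [hnorm]
      gcongr

lemma hasSqrtGrowth_log :
    HasSqrtGrowth (fun u => Real.log u) (fun u => logQuot 1 0 u) (fun u => logQuotDeriv 1 0 u) where
  hasDerivAt u hu := by
    refine (Real.hasDerivAt_log (one_pos.trans_le hu).ne').ofReal_comp.congr_deriv ?_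
    simp [logQuot]
  hasDerivAt_deriv u hu :=
    (hasDerivAt_logQuot 1 0 (Complex.ofReal_mem_slitPlane.2 (one_pos.trans_le hu))).comp_ofReal
  continuousOn_deriv₂ u hu :=
    (hasDerivAt_logQuotDeriv 1 0 (Complex.ofReal_mem_slitPlane.2
      (one_pos.trans_le hu))).comp_ofReal.continuousAt.continuousWithinAt
  exists_norm_le := by
    obtain ⟨C, hC₀, hC⟩ :=
      exists_norm_add_mul_log_div_pow_ofReal_le 0 1 0 (p := 1 / 2) (by norm_num)
    refine ⟨C, hC₀, fun u hu => ?_⟩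
    simpa [Complex.ofReal_log (zero_le_one.trans hu)] using hC u hu
  exists_norm_deriv_le := by
    simpa [logQuot] using
      exists_norm_add_mul_log_div_pow_ofReal_le 1 0 1 (p := -(1 / 2)) (by norm_num)
  exists_norm_deriv₂_le := exists_norm_add_mul_log_div_pow_ofReal_le _ _ 2 (by norm_num)

lemma hasSqrtGrowth_logQuot :
    HasSqrtGrowth (fun u => logQuot 0 1 u) (fun u => logQuotDeriv 0 1 u)
      (fun u => logQuotDeriv₂ 0 1 u) where
  hasDerivAt u hu :=
    (hasDerivAt_logQuot 0 1 (Complex.ofReal_mem_slitPlane.2 (one_pos.trans_le hu))).comp_ofReal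
  hasDerivAt_deriv u hu :=
    (hasDerivAt_logQuotDeriv 0 1 (Complex.ofReal_mem_slitPlane.2 (one_pos.trans_le hu))).comp_ofReal
  continuousOn_deriv₂ :=
    (continuousOn_logQuotDeriv₂ 0 1).comp Complex.continuous_ofReal.continuousOn
      fun _ hu => Complex.ofReal_mem_slitPlane.2 (one_pos.trans_le hu)
  exists_norm_le := by
    simpa [logQuot] using
      exists_norm_add_mul_log_div_pow_ofReal_le 0 1 1 (p := 1 / 2) (by norm_num)
  exists_norm_deriv_le := exists_norm_add_mul_log_div_pow_ofReal_le _ _ 2 (by norm_num)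
  exists_norm_deriv₂_le := exists_norm_add_mul_log_div_pow_ofReal_le _ _ 3 (by norm_num)

lemma sum_range_log_add_one (n : ℕ) :
    ∑ k ∈ Finset.range n, Real.log (k + 1) = Real.log n.factorial := by
  rw [← Finset.prod_range_add_one_eq_factorial, Nat.cast_prod,
    Real.log_prod fun k _ => by positivity]
  simp only [Nat.cast_add, Nat.cast_one]

lemma tendsto_sum_log_sub_integral :
    Tendsto (fun n : ℕ => ∑ k ∈ Finset.range n, Real.log (1 + k + 1) -
      (∫ u in (1 : ℝ)..1 + n, Real.log u) - 1 / 2 * Real.log (1 + n)) atTop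
      (𝓝 (Real.log (2 * Real.pi) / 2 - 1)) := by
  have hstirling := ((Stirling.tendsto_stirlingSeq_sqrt_pi.log (by positivity)).comp
    (tendsto_add_atTop_nat 1)).add_const (Real.log 2 / 2 - 1)
  have hlim : Real.log √Real.pi + (Real.log 2 / 2 - 1) = Real.log (2 * Real.pi) / 2 - 1 := by
    rw [Real.log_sqrt Real.pi_pos.le, Real.log_mul two_ne_zero Real.pi_pos.ne']
    ring
  rw [hlim] at hstirling
  refine hstirling.congr fun n => ?_
  have hn : ((n : ℝ) + 1) ≠ 0 := by positivity
  rw [Function.comp_apply, Stirling.log_stirlingSeq_formula, ← sum_range_log_add_one,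
    Finset.sum_range_succ', integral_log]
  push_cast
  rw [Real.log_mul two_ne_zero hn, Real.log_div hn (Real.exp_pos 1).ne', Real.log_exp]
  simp only [add_comm (1 : ℝ)]
  simp only [zero_add, Real.log_one, add_zero, mul_zero, sub_zero]
  ring

lemma tendsto_expSeries_log_sub_integral :
    Tendsto (fun w => expSeries (fun j => Complex.log j) w -
        ∫ u in Set.Ioi (1 : ℝ), Real.log u * Complex.exp (-(w * u)))
      (𝓝[rightSector R] 0) (𝓝 (Complex.log (2 * Real.pi) / 2 - 1)) := by
  have hK := (Complex.continuous_ofReal.tendsto _).comp tendsto_sum_log_sub_integral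
  have hlim : ((Real.log (2 * Real.pi) / 2 - 1 : ℝ) : ℂ) = Complex.log (2 * Real.pi) / 2 - 1 := by
    rw [Complex.ofReal_sub, Complex.ofReal_div, Complex.ofReal_log (by positivity)]
    push_cast
    rfl
  rw [hlim] at hK
  have h := hasSqrtGrowth_log.tendsto_expSeries_sub_integral (R := R) (by simp) (by simp)
    (by simpa only [Complex.natCast_log] using isSubexponential_log)
    (hK.congr fun n => by simp [intervalIntegral.integral_ofReal])
  simpa only [Complex.natCast_log] using h

lemma tendsto_sum_logQuot_sub_integral :
    Tendsto (fun n : ℕ => ∑ k ∈ Finset.range n, logQuot 0 1 (1 + k + 1 : ℝ) -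
      (∫ u in (1 : ℝ)..1 + n, logQuot 0 1 u) -
        (1 / 2 : ℝ) • (logQuot 0 1 (1 + n : ℝ) - logQuot 0 1 (1 : ℝ))) atTop (𝓝 gamma1) := by
  have hsum := (tendsto_sum_logQuot_natCast_sub_primitive 0 1).comp (tendsto_add_atTop_nat 1)
  have hterm := (tendsto_logQuot_natCast_add 0 1 Complex.one_mem_slitPlane).const_smul (1 / 2 : ℝ)
  have hint (n : ℕ) : ∫ u in (1 : ℝ)..1 + n, logQuot 0 1 u = logQuotPrimitive 0 1 (n + 1) := by
    have hpos (u : ℝ) (hu : u ∈ Set.uIcc (1 : ℝ) (1 + n)) : 1 ≤ u := by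
      rw [Set.uIcc_of_le (by simp)] at hu
      exact hu.1
    rw [intervalIntegral.integral_eq_sub_of_hasDerivAt
      (f := fun u : ℝ => logQuotPrimitive 0 1 u)
      (fun u hu => (hasDerivAt_logQuotPrimitive 0 1 (Complex.ofReal_mem_slitPlane.2
        (one_pos.trans_le (hpos u hu)))).comp_ofReal)
      (hasSqrtGrowth_logQuot.continuousOn.mono hpos).intervalIntegrable]
    simp [logQuotPrimitive, add_comm]
  have h := hsum.sub hterm
  rw [smul_zero, sub_zero, zero_mul, zero_add, one_mul] at h
  refine h.congr fun n => ?_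
  rw [Function.comp_apply, hint, Finset.sum_range_succ']
  simp [logQuot, add_comm]

lemma intervalIntegrable_of_integrableOn_mul_exp
    (hf : IntegrableOn (fun u : ℝ => f u * Complex.exp (-(w * u))) (Set.Ioi 0)) :
    IntervalIntegrable f volume 0 1 := by
  have hmul := ((intervalIntegrable_iff_integrableOn_Ioc_of_le zero_le_one).2
    (hf.mono_set Set.Ioc_subset_Ioi_self)).mul_continuousOn (g := fun u => Complex.exp (w * u))
    (Continuous.continuousOn (by fun_prop))
  refine hmul.congr fun u _ => ?_
  simp only [mul_assoc, ← Complex.exp_add, neg_add_cancel, Complex.exp_zero, mul_one]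

lemma tendsto_integral_Ioi_sub_integral_Ioi
    (hf : ∀ w : ℂ, 0 < w.re →
      IntegrableOn (fun u : ℝ => f u * Complex.exp (-(w * u))) (Set.Ioi 0)) :
    Tendsto (fun w => (∫ u in Set.Ioi (0 : ℝ), f u * Complex.exp (-(w * u))) -
        ∫ u in Set.Ioi (1 : ℝ), f u * Complex.exp (-(w * u)))
      (𝓝[rightSector R] 0) (𝓝 (∫ u in (0 : ℝ)..1, f u)) := by
  have hf₁ : IntervalIntegrable f volume 0 1 :=
    intervalIntegrable_of_integrableOn_mul_exp (hf 1 (by simp))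
  have hlim : Tendsto (fun w => ∫ u in (0 : ℝ)..1, f u * Complex.exp (-(w * u)))
      (𝓝[rightSector R] 0) (𝓝 (∫ u in (0 : ℝ)..1, f u)) := by
    refine intervalIntegral.tendsto_integral_filter_of_dominated_convergence (fun u => ‖f u‖)
      (.of_forall fun w => hf₁.def'.aestronglyMeasurable.mul
        (Continuous.aestronglyMeasurable (by fun_prop))) ?_ hf₁.norm (.of_forall fun u _ => ?_)
    · filter_upwards [self_mem_nhdsWithin] with w hw
      refine .of_forall fun u hu => ?_
      rw [Set.uIoc_of_le zero_le_one] at hu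
      rw [norm_mul, Complex.norm_exp]
      refine mul_le_of_le_one_right (norm_nonneg _) (Real.exp_le_one_iff.2 ?_)
      simpa using mul_nonneg hw.1.le hu.1.le
    · have hcont : Continuous fun w => f u * Complex.exp (-(w * u)) := by fun_prop
      simpa using (hcont.tendsto 0).mono_left nhdsWithin_le_nhds
  refine hlim.congr' ?_
  filter_upwards [self_mem_nhdsWithin] with w hw
  exact eq_sub_of_add_eq (intervalIntegral.integral_interval_add_Ioi (hf w hw.1)
    ((hf w hw.1).mono_set (Set.Ioi_subset_Ioi zero_le_one)))

lemma tendsto_logSeries :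
    Tendsto logSeries (𝓝[rightSector R] 0) (𝓝 (Complex.log (2 * Real.pi) / 2)) := by
  have hsmall := tendsto_integral_Ioi_sub_integral_Ioi (R := R)
    fun w hw => (integral_log_mul_exp_neg_mul hw).1
  have hlog : ∫ u in (0 : ℝ)..1, (Real.log u : ℂ) = -1 := by
    rw [intervalIntegral.integral_ofReal, integral_log]
    simp
  rw [hlog] at hsmall
  have h := tendsto_expSeries_log_sub_integral.sub hsmall
  rw [sub_neg_eq_add, sub_add_cancel] at h
  refine h.congr' ?_
  filter_upwards [self_mem_nhdsWithin] with w hw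
  rw [logSeries, (integral_log_mul_exp_neg_mul hw.1).2]
  ring

lemma integral_logQuot_mul_exp (hw : 0 < w.re) :
    ∫ u in Set.Ioi (1 : ℝ), logQuot 0 1 u * Complex.exp (-(w * u)) =
      w / 2 * ∫ u in Set.Ioi (1 : ℝ), (Real.log u : ℂ) ^ 2 * Complex.exp (-(w * u)) := by
  have hquot := hasSqrtGrowth_logQuot.integrableOn_mul_exp hw
  have hsq := (integral_log_sq_mul_exp_neg_mul hw).1.mono_set (Set.Ioi_subset_Ioi zero_le_one)
  have hderiv (u : ℝ) (hu : 1 ≤ u) :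
      HasDerivAt (fun u : ℝ => 1 / 2 * ((Real.log u : ℂ) ^ 2 * Complex.exp (-(w * u))))
        (logQuot 0 1 u * Complex.exp (-(w * u)) -
          w / 2 * ((Real.log u : ℂ) ^ 2 * Complex.exp (-(w * u)))) u := by
    refine ((((hasSqrtGrowth_log.hasDerivAt u hu).fun_pow 2).fun_mul
      (hasDerivAt_exp_neg_mul_ofReal w u)).const_mul (1 / 2)).congr_deriv ?_
    simp only [logQuot, ← Complex.ofReal_log (zero_le_one.trans hu)]
    push_cast
    ring
  have hint := hquot.sub (hsq.const_mul (w / 2))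
  have hzero := tendsto_zero_of_hasDerivAt_of_integrableOn_Ioi
    (fun u hu => hderiv u (le_of_lt hu)) hint (hsq.const_mul (1 / 2))
  have key := integral_Ioi_of_hasDerivAt_of_tendsto
    (hderiv 1 le_rfl).continuousAt.continuousWithinAt (fun u hu => hderiv u (le_of_lt hu))
    hint hzero
  rw [integral_sub hquot (hsq.const_mul (w / 2)), integral_const_mul] at key
  simpa [sub_eq_zero] using key

lemma tendsto_logSeriesPrimitive :
    Tendsto logSeriesPrimitive (𝓝[rightSector R] 0)
      (𝓝 (-gamma1 - eulerGamma ^ 2 / 2 - Real.pi ^ 2 / 12)) := by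
  have hsmall := tendsto_integral_Ioi_sub_integral_Ioi (R := R)
    fun w hw => (integral_log_sq_mul_exp_neg_mul hw).1
  have hw₀ : Tendsto (fun w : ℂ => w / 2) (𝓝[rightSector R] 0) (𝓝 0) := by
    have hcont : Continuous fun w : ℂ => w / 2 := by fun_prop
    simpa using (hcont.tendsto 0).mono_left nhdsWithin_le_nhds
  have hseries := hasSqrtGrowth_logQuot.tendsto_expSeries_sub_integral (R := R)
    (by simp [logQuot]) (by simp [logQuot]) (by simpa using isSubexponential_logQuot_zero_one)
    tendsto_sum_logQuot_sub_integral
  have h := ((hw₀.mul hsmall).sub hseries).sub_const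
    ((eulerGamma : ℂ) ^ 2 / 2 + (Real.pi : ℂ) ^ 2 / 12)
  rw [zero_mul, zero_sub, ← sub_sub] at h
  refine h.congr' ?_
  filter_upwards [self_mem_nhdsWithin] with w hw
  have hw_ne : w ≠ 0 := Complex.ne_zero_of_re_pos hw.1
  rw [logSeriesPrimitive, logQuotPrimitive, integral_logQuot_mul_exp hw.1,
    (integral_log_sq_mul_exp_neg_mul hw.1).2]
  simp only [Complex.ofReal_natCast]
  field_simp
  ring

end LogAbelLimits

section LambertSeries

variable {b : ℕ → ℂ} {w y : ℂ}

lemma hasSum_exp_neg_mul_natCast_add_one (hw : 0 < w.re) :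
    HasSum (fun k : ℕ => Complex.exp (-(w * (k + 1)))) (1 / (Complex.exp w - 1)) := by
  have hnorm : ‖Complex.exp (-w)‖ < 1 := by
    rw [Complex.norm_exp, Complex.neg_re, Real.exp_lt_one_iff]
    exact neg_neg_of_pos hw
  have hgeom := (hasSum_geometric_of_norm_lt_one hnorm).mul_left (Complex.exp (-w))
  have hsum : Complex.exp (-w) * (1 - Complex.exp (-w))⁻¹ = 1 / (Complex.exp w - 1) := by
    have hne : 1 - Complex.exp (-w) ≠ 0 := sub_ne_zero.2 fun h => by simp [← h] at hnorm
    have hfactor : Complex.exp w - 1 = Complex.exp w * (1 - Complex.exp (-w)) := by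
      rw [mul_sub, ← Complex.exp_add]
      simp
    rw [hfactor, Complex.exp_neg]
    field_simp [hne]
  refine (hsum ▸ hgeom).congr_fun fun k => ?_
  rw [← Complex.exp_nat_mul, ← Complex.exp_add]
  ring_nf

namespace IsSubexponential

lemma summable_prod (hb : IsSubexponential b) (hy : 0 < y.re) :
    Summable fun p : ℕ × ℕ => b (p.2 + 1) * Complex.exp (-(y * (p.1 + 1) * (p.2 + 1 : ℕ))) := by
  have hgeom := isSubexponential_one y.re hy
  have hcoeff := (summable_nat_add_iff 1).2 (hb y.re hy)
  have hprod := hgeom.mul_of_nonneg hcoeff (fun k => by positivity) fun j => by positivity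
  refine .of_norm_bounded hprod fun ⟨k, j⟩ => ?_
  have hkj : 0 ≤ y.re * (k * j) := by positivity
  calc ‖b (j + 1) * Complex.exp (-(y * (k + 1) * (j + 1 : ℕ)))‖
      = ‖b (j + 1)‖ * Real.exp (-(y.re * (k + 1) * (j + 1))) := by
        simp [Complex.norm_exp]
    _ ≤ ‖b (j + 1)‖ * Real.exp (-(y.re * k) + -(y.re * (j + 1))) := by
        gcongr
        nlinarith only [hkj]
    _ = _ := by
        rw [Real.exp_add]
        simp only [Pi.one_apply, norm_one, one_mul, Nat.cast_add, Nat.cast_one]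
        ring

lemma hasSum_expSeries_mul_natCast_add_one (hb : IsSubexponential b) (hb₀ : b 0 = 0)
    (hy : 0 < y.re) :
    HasSum (fun k : ℕ => expSeries b (y * (k + 1)))
      (∑' j : ℕ, b (j + 1) / (Complex.exp ((j + 1) * y) - 1)) := by
  have hF := hb.summable_prod hy
  have hrow (k : ℕ) : HasSum (fun j : ℕ =>
      b (j + 1) * Complex.exp (-(y * (k + 1) * (j + 1 : ℕ)))) (expSeries b (y * (k + 1))) := by
    have hre : 0 < (y * (k + 1)).re := by
      rw [← Nat.cast_add_one, re_mul_natCast]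
      positivity
    rw [expSeries, (hb.summable hre).tsum_eq_zero_add]
    simpa [hb₀] using (hF.prod_factor k).hasSum
  have hcol (j : ℕ) : HasSum (fun k : ℕ =>
      b (j + 1) * Complex.exp (-(y * (k + 1) * (j + 1 : ℕ))))
      (b (j + 1) / (Complex.exp ((j + 1) * y) - 1)) := by
    have hre : 0 < ((j + 1) * y).re := by
      rw [mul_comm, ← Nat.cast_add_one, re_mul_natCast]
      positivity
    rw [div_eq_mul_one_div]
    refine ((hasSum_exp_neg_mul_natCast_add_one hre).mul_left (b (j + 1))).congr_fun fun k => ?_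
    push_cast
    ring_nf
  have hswap := (Equiv.prodComm ℕ ℕ).tsum_eq fun p : ℕ × ℕ =>
    b (p.2 + 1) * Complex.exp (-(y * (p.1 + 1) * (p.2 + 1 : ℕ)))
  rw [(hF.prod_symm.hasSum.prod_fiberwise hcol).tsum_eq]
  exact hswap ▸ hF.hasSum.prod_fiberwise hrow

end IsSubexponential

end LambertSeries

section Asymptotics

variable {y s : ℂ}

lemma logQuotPrimitive_mul (a b : ℂ) (hy : 0 < y.re) (hys : 0 < (y * s).re) :
    logQuotPrimitive a b (y * s) =
      logQuotPrimitive (a + b * Complex.log y) b s + logQuotPrimitive a b y := by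
  simp only [logQuotPrimitive, log_mul_of_re_pos hy hys]
  ring

lemma tendsto_logSeries_mul_natCast (hy : 0 < y.re) :
    Tendsto (fun N : ℕ => logSeries (y * N)) atTop (𝓝 0) := by
  have hseries := isSubexponential_log.tendsto_expSeries_mul_natCast (by simp) hy
  have hquot : Tendsto (fun N : ℕ => logQuot (eulerGamma + 1 * Complex.log y) 1 N) atTop (𝓝 0) :=
    (tendsto_add_atTop_iff_nat 1).1 (by
      simpa using tendsto_logQuot_natCast_add (eulerGamma + 1 * Complex.log y) 1
        Complex.one_mem_slitPlane)
  have h := hseries.add (hquot.div_const y)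
  rw [zero_div, add_zero] at h
  refine h.congr' ?_
  filter_upwards [eventually_gt_atTop 0] with N hN
  have hre : 0 < (y * N).re := by
    rw [re_mul_natCast]
    positivity
  rw [logSeries, logQuot_mul _ _ hy hre]

lemma tendsto_sum_logSeries_sub_primitive (hy : 0 < y.re) :
    Tendsto (fun N : ℕ => ∑ k ∈ Finset.range N, logSeries (y * (k + 1)) -
        logSeriesPrimitive (y * N) / y) atTop
      (𝓝 (∑' n : ℕ, Complex.log (n + 1) / (Complex.exp ((n + 1) * y) - 1) +
        (eulerGamma ^ 2 + gamma1 - Complex.log y ^ 2 / 2) / y)) := by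
  have hlambert := (isSubexponential_log.hasSum_expSeries_mul_natCast_add_one
    (by simp) hy).tendsto_sum_nat
  have hquot := ((tendsto_sum_logQuot_natCast_sub_primitive
    (eulerGamma + 1 * Complex.log y) 1).sub_const (logQuotPrimitive eulerGamma 1 y)).div_const y
  have htail := (isSubexponential_logQuot_zero_one.tendsto_expSeries_mul_natCast
    (by simp [logQuot]) hy).div_const y
  have hlim : (∑' n : ℕ, Complex.log (n + 1 : ℕ) / (Complex.exp ((n + 1) * y) - 1)) +
      ((eulerGamma + 1 * Complex.log y) * eulerGamma + 1 * gamma1 -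
        logQuotPrimitive eulerGamma 1 y) / y + 0 / y =
      ∑' n : ℕ, Complex.log (n + 1) / (Complex.exp ((n + 1) * y) - 1) +
        (eulerGamma ^ 2 + gamma1 - Complex.log y ^ 2 / 2) / y := by
    simp only [logQuotPrimitive]
    push_cast
    ring
  refine (hlim ▸ (hlambert.add hquot).add htail).congr' ?_
  filter_upwards [eventually_gt_atTop 0] with N hN
  have hre (k : ℕ) (hk : 0 < k) : 0 < (y * k).re := by
    rw [re_mul_natCast]
    positivity
  have hterm (k : ℕ) : logQuot eulerGamma 1 (y * (k + 1)) =
      logQuot (eulerGamma + 1 * Complex.log y) 1 (k + 1) / y :=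
    logQuot_mul _ _ hy (by exact_mod_cast hre (k + 1) k.succ_pos)
  simp only [logSeries, logSeriesPrimitive, hterm, logQuotPrimitive_mul _ _ hy (hre N hN),
    Finset.sum_add_distrib, ← Finset.sum_div]
  ring

end Asymptotics

section PoissonSummation

variable {y : ℂ}

lemma hasDerivAt_comp_mul_ofReal {g : ℂ → ℂ} {g' : ℂ} {v : ℝ} (hg : HasDerivAt g g' (y * v)) :
    HasDerivAt (fun v : ℝ => g (y * v)) (y * g') v := by
  have hmul : HasDerivAt (fun z : ℂ => y * z) y v := by
    simpa using (hasDerivAt_id (v : ℂ)).const_mul y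
  exact (hg.comp (v : ℂ) hmul).comp_ofReal.congr_deriv (mul_comm _ _)

lemma hasDerivAt_logSeriesDeriv_mul_ofReal (hy : 0 < y.re) {v : ℝ} (hv : 0 < v) :
    HasDerivAt (fun v : ℝ => y * logSeriesDeriv (y * v))
      (-y⁻¹ * ∑' n, logQuotDeriv₂Pair (eulerGamma + Complex.log y) 1
        (2 * Real.pi * Complex.I / y) n v) v := by
  have hyv : 0 < (y * v).re := by simpa using mul_pos hy hv
  have hcoeff : -y⁻¹ * -y ^ 3 = y * y := by
    field_simp [Complex.ne_zero_of_re_pos hy]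
  refine ((hasDerivAt_comp_mul_ofReal (hasDerivAt_logSeriesDeriv hyv)).const_mul y).congr_deriv ?_
  rw [tsum_logQuotDeriv₂Pair_eq hy hv, ← mul_assoc y, ← mul_assoc (-y⁻¹), hcoeff, expSeries]
  simp only [Complex.natCast_log]

/-- `v ↦ logSeries (y * v)` on `[0, ∞)`, extended continuously to `v = 0`, where `logSeries` itself
takes a junk value. -/
noncomputable def logSeriesRay (y : ℂ) : ℝ → ℂ :=
  Function.update (fun v : ℝ => logSeries (y * v)) 0 (Complex.log (2 * Real.pi) / 2)

lemma logSeriesRay_zero (y : ℂ) : logSeriesRay y 0 = Complex.log (2 * Real.pi) / 2 :=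
  Function.update_self ..

lemma logSeriesRay_of_pos (y : ℂ) {v : ℝ} (hv : 0 < v) : logSeriesRay y v = logSeries (y * v) :=
  Function.update_of_ne hv.ne' ..

lemma hasDerivAt_logSeriesRay (hy : 0 < y.re) {v : ℝ} (hv : 0 < v) :
    HasDerivAt (logSeriesRay y) (y * logSeriesDeriv (y * v)) v := by
  have hyv : 0 < (y * v).re := by simpa using mul_pos hy hv
  exact (hasDerivAt_comp_mul_ofReal (hasDerivAt_logSeries hyv)).congr_of_eventuallyEq
    ((eventually_gt_nhds hv).mono fun _ => logSeriesRay_of_pos y)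

lemma continuousOn_logSeriesRay (hy : 0 < y.re) : ContinuousOn (logSeriesRay y) (Set.Ici 0) := by
  intro v hv
  rcases (Set.mem_Ici.1 hv).eq_or_lt with rfl | hv₀
  · rw [← continuousWithinAt_Ioi_iff_Ici, ContinuousWithinAt, logSeriesRay_zero]
    refine (tendsto_logSeries.comp (tendsto_mul_ofReal_rightSector hy)).congr' ?_
    filter_upwards [self_mem_nhdsWithin] with v hv using (logSeriesRay_of_pos y hv).symm
  · exact (hasDerivAt_logSeriesRay hy hv₀).continuousAt.continuousWithinAt

lemma integral_logSeriesRay (hy : 0 < y.re) {N : ℝ} (hN : 0 < N) :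
    ∫ v in (0 : ℝ)..N, logSeriesRay y v = logSeriesPrimitive (y * N) / y -
      (-gamma1 - eulerGamma ^ 2 / 2 - Real.pi ^ 2 / 12) / y := by
  have hderiv (v : ℝ) (hv : 0 < v) :
      HasDerivAt (fun v : ℝ => logSeriesPrimitive (y * v) / y) (logSeriesRay y v) v := by
    have hyv : 0 < (y * v).re := by simpa using mul_pos hy hv
    refine ((hasDerivAt_comp_mul_ofReal (hasDerivAt_logSeriesPrimitive hyv)).div_const
      y).congr_deriv ?_
    rw [logSeriesRay_of_pos y hv, mul_div_cancel_left₀ _ (Complex.ne_zero_of_re_pos hy)]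
  have hint : IntervalIntegrable (logSeriesRay y) volume 0 N :=
    ((continuousOn_logSeriesRay hy).mono
      (Set.uIcc_of_le hN.le ▸ Set.Icc_subset_Ici_self)).intervalIntegrable
  exact intervalIntegral.integral_eq_sub_of_hasDerivAt_of_tendsto hN
    (fun v hv => hderiv v hv.1) hint
    ((tendsto_logSeriesPrimitive.comp (tendsto_mul_ofReal_rightSector hy)).div_const y)
    ((hderiv N hN).continuousAt.tendsto.mono_left nhdsWithin_le_nhds)

lemma tendsto_sum_logSeriesRay_sub_integral (hy : 0 < y.re) :
    Tendsto (fun N : ℕ => ∑ k ∈ Finset.range N, logSeriesRay y (k + 1) -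
        (∫ v in (0 : ℝ)..N, logSeriesRay y v) -
        (1 / 2 : ℝ) • (logSeriesRay y N - logSeriesRay y 0)) atTop
      (𝓝 (∑' n : ℕ, Complex.log (n + 1) / (Complex.exp ((n + 1) * y) - 1) +
        (eulerGamma ^ 2 - Complex.log y ^ 2 - Real.pi ^ 2 / 6) / (2 * y) +
        Complex.log (2 * Real.pi) / 4)) := by
  have h := ((tendsto_sum_logSeries_sub_primitive hy).add_const
    ((-gamma1 - eulerGamma ^ 2 / 2 - Real.pi ^ 2 / 12) / y)).sub
    (((tendsto_logSeries_mul_natCast hy).sub_const (Complex.log (2 * Real.pi) / 2)).const_smul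
      (1 / 2 : ℝ))
  have hlim : ∑' n : ℕ, Complex.log (n + 1) / (Complex.exp ((n + 1) * y) - 1) +
      (eulerGamma ^ 2 + gamma1 - Complex.log y ^ 2 / 2) / y +
      (-gamma1 - eulerGamma ^ 2 / 2 - Real.pi ^ 2 / 12) / y -
      (1 / 2 : ℝ) • (0 - Complex.log (2 * Real.pi) / 2) =
      ∑' n : ℕ, Complex.log (n + 1) / (Complex.exp ((n + 1) * y) - 1) +
        (eulerGamma ^ 2 - Complex.log y ^ 2 - Real.pi ^ 2 / 6) / (2 * y) +
        Complex.log (2 * Real.pi) / 4 := by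
    rw [Complex.real_smul]
    push_cast
    ring
  refine (hlim ▸ h).congr' ?_
  filter_upwards [eventually_gt_atTop 0] with N hN
  have hN₀ : (0 : ℝ) < N := Nat.cast_pos.2 hN
  have hterm (k : ℕ) : logSeriesRay y (k + 1) = logSeries (y * (k + 1)) := by
    rw [logSeriesRay_of_pos y k.cast_add_one_pos]
    push_cast
    rfl
  rw [integral_logSeriesRay hy hN₀, logSeriesRay_of_pos y hN₀, logSeriesRay_zero,
    Finset.sum_congr rfl fun k _ => hterm k, Complex.ofReal_natCast, sub_sub_eq_add_sub,
    sub_add_eq_add_sub]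

lemma integral_trapezoidKernel_tsum_logQuotDeriv₂Pair (hy : 0 < y.re) :
    -y⁻¹ * ∫ v in Set.Ioi (0 : ℝ), trapezoidKernel v •
        ∑' n, logQuotDeriv₂Pair (eulerGamma + Complex.log y) 1 (2 * Real.pi * Complex.I / y) n v =
      ∑' n : ℕ, Complex.log (n + 1) / (Complex.exp ((n + 1) * y) - 1) +
        (eulerGamma ^ 2 - Complex.log y ^ 2 - Real.pi ^ 2 / 6) / (2 * y) +
        Complex.log (2 * Real.pi) / 4 := by
  set D : ℝ → ℂ := fun v => ∑' n, logQuotDeriv₂Pair (eulerGamma + Complex.log y) 1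
    (2 * Real.pi * Complex.I / y) n v
  have hζ := im_two_pi_I_div_ne_zero hy
  have hcont : ContinuousOn (fun v => -y⁻¹ * D v) (Set.Ici ((0 : ℕ) : ℝ)) :=
    Nat.cast_zero (R := ℝ) ▸ continuousOn_const.mul (continuousOn_tsum_logQuotDeriv₂Pair _ 1 hζ)
  have hint : IntegrableOn (fun v => -y⁻¹ * D v) (Set.Ioi ((0 : ℕ) : ℝ)) :=
    Nat.cast_zero (R := ℝ) ▸ (integrableOn_tsum_logQuotDeriv₂Pair _ 1 hζ).const_mul _
  have hEM := tendsto_sum_range_succ_sub_integral 0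
    (Nat.cast_zero (R := ℝ) ▸ continuousOn_logSeriesRay hy)
    (fun v hv => hasDerivAt_logSeriesRay hy (by simpa using hv))
    (fun v hv => hasDerivAt_logSeriesDeriv_mul_ofReal hy (by simpa using hv)) hcont hint
  simp only [Nat.cast_zero, zero_add, ← mul_smul_comm, integral_const_mul] at hEM
  exact tendsto_nhds_unique hEM (tendsto_sum_logSeriesRay_sub_integral hy)

end PoissonSummation

theorem stmt0 (y : ℂ) (hy : 0 < y.re) :
    Summable (wigTerm y) ∧ Summable (psiTerm y) ∧
    ∑' n : ℕ, Complex.log ((n : ℂ) + 1) / (Complex.exp (((n : ℂ) + 1) * y) - 1) =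
      -(1/4) * Complex.log (2 * (Real.pi : ℂ)) + (Complex.log y) ^ 2 / (2 * y)
        - (eulerGamma : ℂ) ^ 2 / (2 * y) + (Real.pi : ℂ) ^ 2 / (12 * y)
        - (2 / y) * ((eulerGamma : ℂ) + Complex.log y) * (∑' n : ℕ, wigTerm y n)
        + (1 / y) * (∑' n : ℕ, psiTerm y n) := by
  have hpoisson := integral_trapezoidKernel_tsum_logQuotDeriv₂Pair hy
  have hpsi := tsum_psiTerm_sub_tsum_wigTerm hy (eulerGamma + Complex.log y)
  refine ⟨summable_wigTerm hy, summable_psiTerm hy, ?_⟩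
  linear_combination -hpoisson - y⁻¹ * hpsi
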